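/- arXiv:2503.00316 — 7 statements merged into one kernel-verified Lean document; each statement's English description precedes it below -/
import Mathlib

section
/- Let X be a compact metric space, f : X → X a continuous map, and S ⊆ X a subset such that (i) S is a distal set for f, and (ii) for every x ∈ S and every ε > 0 the set V_ε^s(x) is dense in X. Then for every integer n with 2 ≤ n < |S| + 1 there exists δ_n > 0 such that the set DC1_n^{δ_n}(X,f) of DC1-n-δ_n-scrambled n-tuples is a residual subset of X^n. -/
/-!
Both halves of the DC1 condition say that an open condition on tuples holds along a set of times of
upper density one. If open conditions `x ∈ U i` hold for all large `i` on a dense set of points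
`x`, then on a dense set the partial densities converge to one; as they are lower semicontinuous in
`x`, the points where they exceed a given `a < 1` infinitely often form a dense `G_δ`.

It remains to find the two dense sets. Let `p 0, …, p (n - 1)` be points of a distal set whose
orbits stay `c` apart, and let `δ < c`. Tuples that eventually shadow `p` closely are dense, and
their orbits are eventually more than `δ` apart; tuples that eventually shadow the constant tuple
`p 0` are dense, and their orbits are eventually `ε`-close.
-/

open Filter Topology

/-- `V_ε^s(x)`: points whose forward orbit eventually stays ε-close (in limsup) to that of `x`. -/
def Vs {X : Type*} [MetricSpace X] (f : X → X) (x : X) (ε : ℝ) : Set X :=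
  {y | Filter.limsup (fun i : ℕ => dist (f^[i] x) (f^[i] y)) Filter.atTop ≤ ε}

open Classical in
/-- A DC1-`n`-`δ`-scrambled tuple. -/
def DC1Scrambled {X : Type*} [MetricSpace X] (f : X → X) {n : ℕ} (δ : ℝ)
    (x : Fin n → X) : Prop :=
  Filter.limsup (fun m : ℕ =>
      ((((Finset.range m).filter fun i => ∀ j k : Fin n, j < k →
        δ < dist (f^[i] (x j)) (f^[i] (x k))).card : ℝ) / m)) Filter.atTop = 1 ∧
  ∀ ε : ℝ, 0 < ε → Filter.limsup (fun m : ℕ =>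
      ((((Finset.range m).filter fun i => ∀ j k : Fin n, j < k →
        dist (f^[i] (x j)) (f^[i] (x k)) < ε).card : ℝ) / m)) Filter.atTop = 1

/-- `S` is a distal set for `f`. -/
def DistalSet {X : Type*} [MetricSpace X] (f : X → X) (S : Set X) : Prop :=
  ∀ n : ℕ, 2 ≤ n → ∀ x : Fin n → X, (∀ j, x j ∈ S) → Function.Injective x →
    ∃ c : ℝ, 0 < c ∧ ∀ i : ℕ, ∀ j k : Fin n, j < k → c ≤ dist (f^[i] (x j)) (f^[i] (x k))

/-- `f` restricted to `Λ` is minimal: `Λ` is the orbit closure of each of its points. -/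
def MinimalOn {X : Type*} [TopologicalSpace X] (f : X → X) (Λ : Set X) : Prop :=
  ∀ x ∈ Λ, closure (Set.range fun i : ℕ => f^[i] x) = Λ

/-- `f` restricted to `Λ` is equicontinuous. -/
def EquicontOnSet {X : Type*} [MetricSpace X] (f : X → X) (Λ : Set X) : Prop :=
  ∀ ε : ℝ, 0 < ε → ∃ δ : ℝ, 0 < δ ∧ ∀ x ∈ Λ, ∀ y ∈ Λ, dist x y ≤ δ →
    ∀ i : ℕ, dist (f^[i] x) (f^[i] y) ≤ ε

/-- Topological transitivity. -/
def IsTransitive {Z : Type*} [TopologicalSpace Z] (h : Z → Z) : Prop :=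
  ∀ U V : Set Z, IsOpen U → IsOpen V → U.Nonempty → V.Nonempty →
    ∃ i : ℕ, ∃ z ∈ U, h^[i] z ∈ V

/-- `N(x,ε)` : times at which the orbit of `x` returns ε-close to `x`. -/
def retTimes {X : Type*} [MetricSpace X] (f : X → X) (x : X) (ε : ℝ) : Set ℕ :=
  {i : ℕ | dist x (f^[i] x) ≤ ε}

/-- `R(f,𝓕)`: the set of `𝓕`-recurrent points. -/
def FRecurrent {X : Type*} [MetricSpace X] (f : X → X) (F : Set (Set ℕ)) : Set X :=
  {x | ∀ ε : ℝ, 0 < ε → retTimes f x ε ∈ F}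

/-- The dual family `𝓕*`. -/
def dualFamily (F : Set (Set ℕ)) : Set (Set ℕ) :=
  {A | ∀ B ∈ F, (A ∩ B).Nonempty}

/-- `Δ(A)`, the difference set of `A`. -/
def deltaSet (A : Set ℕ) : Set ℕ :=
  {i | ∃ j ∈ A, ∃ k ∈ A, j ≤ k ∧ i = k - j}

/-- `Δ(𝓕)`. -/
def deltaFamily (F : Set (Set ℕ)) : Set (Set ℕ) :=
  {B | ∃ A ∈ F, 0 ∈ A ∧ deltaSet A ⊆ B}

/-- `𝓕`-transitivity: `N(U,V) ∈ 𝓕` for all nonempty open `U, V`. -/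
def FTransitive {X : Type*} [TopologicalSpace X] (f : X → X) (F : Set (Set ℕ)) : Prop :=
  ∀ U V : Set X, IsOpen U → IsOpen V → U.Nonempty → V.Nonempty →
    {i : ℕ | ∃ x ∈ U, f^[i] x ∈ V} ∈ F

section UpperDensity

open Classical in
/-- The proportion of the times `0, …, m - 1` that lie in `A`; it is `0` for `m = 0`. -/
noncomputable def partialDensity (A : Set ℕ) (m : ℕ) : ℝ :=
  ((Finset.range m).filter (· ∈ A)).card / m

/-- The upper asymptotic density of a set of times. -/
noncomputable def upperDensity (A : Set ℕ) : ℝ :=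
  limsup (partialDensity A) atTop

lemma partialDensity_nonneg (A : Set ℕ) (m : ℕ) : 0 ≤ partialDensity A m := by
  unfold partialDensity
  positivity

lemma partialDensity_le_one (A : Set ℕ) (m : ℕ) : partialDensity A m ≤ 1 := by
  classical
  refine div_le_one_of_le₀ ?_ m.cast_nonneg
  exact_mod_cast (Finset.card_filter_le (Finset.range m) _).trans_eq (Finset.card_range m)

lemma partialDensity_le_partialDensity {A B : Set ℕ} {m : ℕ} (h : ∀ i < m, i ∈ A → i ∈ B) :
    partialDensity A m ≤ partialDensity B m := by
  classical
  refine div_le_div_of_nonneg_right (Nat.cast_le.2 (Finset.card_le_card fun i hi => ?_))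
    m.cast_nonneg
  rw [Finset.mem_filter, Finset.mem_range] at hi ⊢
  exact ⟨hi.1, h i hi.1 hi.2⟩

lemma isBoundedUnder_le_partialDensity (A : Set ℕ) :
    atTop.IsBoundedUnder (· ≤ ·) (partialDensity A) :=
  isBoundedUnder_of ⟨1, partialDensity_le_one A⟩

lemma isCoboundedUnder_le_partialDensity (A : Set ℕ) :
    atTop.IsCoboundedUnder (· ≤ ·) (partialDensity A) :=
  (isBoundedUnder_of ⟨0, partialDensity_nonneg A⟩).isCoboundedUnder_le

lemma upperDensity_eq_one_iff {A : Set ℕ} :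
    upperDensity A = 1 ↔ ∀ a < 1, ∃ᶠ m in atTop, a < partialDensity A m := by
  have hle : upperDensity A ≤ 1 :=
    limsup_le_of_le (isCoboundedUnder_le_partialDensity A)
      (Eventually.of_forall (partialDensity_le_one A))
  rw [← hle.ge_iff_eq]
  exact le_limsup_iff (isCoboundedUnder_le_partialDensity A) (isBoundedUnder_le_partialDensity A)

lemma upperDensity_eq_one_of_subset {A B : Set ℕ} (hAB : A ⊆ B) (hA : upperDensity A = 1) :
    upperDensity B = 1 := by
  rw [upperDensity_eq_one_iff] at hA ⊢
  exact fun a ha => (hA a ha).mono fun m hm =>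
    hm.trans_le (partialDensity_le_partialDensity fun i _ hi => hAB hi)

lemma one_sub_div_le_partialDensity {A : Set ℕ} {K m : ℕ} (hA : ∀ i ≥ K, i ∈ A) (hm : 0 < m) :
    1 - (K : ℝ) / m ≤ partialDensity A m := by
  classical
  have hsub : Finset.Ico K m ⊆ (Finset.range m).filter (· ∈ A) := fun i hi => by
    rw [Finset.mem_Ico] at hi
    exact Finset.mem_filter.2 ⟨Finset.mem_range.2 hi.2, hA i hi.1⟩
  have hcard : m ≤ ((Finset.range m).filter (· ∈ A)).card + K := by
    have := Finset.card_le_card hsub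
    rw [Nat.card_Ico] at this
    lia
  rw [one_sub_div (by positivity), partialDensity]
  gcongr
  rw [sub_le_iff_le_add]
  exact_mod_cast hcard

lemma tendsto_partialDensity_one {A : Set ℕ} (hA : ∀ᶠ i in atTop, i ∈ A) :
    Tendsto (partialDensity A) atTop (𝓝 1) := by
  obtain ⟨K, hK⟩ := eventually_atTop.1 hA
  have hlower : Tendsto (fun m : ℕ => 1 - (K : ℝ) / m) atTop (𝓝 1) := by
    simpa using tendsto_const_nhds.sub (tendsto_const_div_atTop_nhds_zero_nat (K : ℝ))
  refine tendsto_of_tendsto_of_tendsto_of_le_of_le' hlower tendsto_const_nhds ?_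
    (Eventually.of_forall (partialDensity_le_one A))
  filter_upwards [eventually_gt_atTop 0] with m hm
  exact one_sub_div_le_partialDensity hK hm

end UpperDensity

section Residual

variable {Y : Type*} [TopologicalSpace Y] {U : ℕ → Set Y}

lemma lowerSemicontinuous_partialDensity (hU : ∀ i, IsOpen (U i)) (m : ℕ) :
    LowerSemicontinuous fun y => partialDensity {i | y ∈ U i} m := by
  intro y a ha
  have hnear : ∀ᶠ z in 𝓝 y, ∀ i < m, y ∈ U i → z ∈ U i :=
    (Set.finite_lt_nat m).eventually_all.2 fun i _ =>
      eventually_imp_distrib_left.2 fun hi => (hU i).mem_nhds hi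
  filter_upwards [hnear] with z hz
  exact ha.trans_le (partialDensity_le_partialDensity hz)

lemma eventually_residual_frequently_mem (hU : ∀ m, IsOpen (U m))
    (hd : Dense {y | ∃ᶠ m in atTop, y ∈ U m}) :
    ∀ᶠ y in residual Y, ∃ᶠ m in atTop, y ∈ U m := by
  simp only [frequently_atTop] at hd ⊢
  refine eventually_countable_forall.2 fun N => ?_
  have hopen : IsOpen {y | ∃ m ≥ N, y ∈ U m} := by
    simp only [Set.ofPred_exists, Set.ofPred_and]
    exact isOpen_iUnion fun m => isOpen_const.inter (hU m)
  exact residual_of_dense_open hopen (hd.mono fun y (hy : ∀ a, ∃ m ≥ a, y ∈ U m) => hy N)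

theorem eventually_residual_upperDensity_eq_one (hU : ∀ i, IsOpen (U i))
    (hd : Dense {y | ∀ᶠ i in atTop, y ∈ U i}) :
    ∀ᶠ y in residual Y, upperDensity {i | y ∈ U i} = 1 := by
  have hrat : ∀ᶠ y in residual Y, ∀ q : ℚ, (q : ℝ) < 1 →
      ∃ᶠ m in atTop, (q : ℝ) < partialDensity {i | y ∈ U i} m := by
    refine eventually_countable_forall.2 fun q => eventually_imp_distrib_left.2 fun hq => ?_
    refine eventually_residual_frequently_mem
      (fun m => (lowerSemicontinuous_partialDensity hU m).isOpen_preimage q) ?_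
    exact hd.mono fun y hy => ((tendsto_partialDensity_one hy).eventually_const_lt hq).frequently
  filter_upwards [hrat] with y hy
  refine upperDensity_eq_one_iff.2 fun a ha => ?_
  obtain ⟨q, haq, hq⟩ := exists_rat_btwn ha
  exact (hy q (by exact_mod_cast hq)).mono fun m hm => haq.trans hm

end Residual

section OrbitTimes

lemma continuous_dist_iterate {X ι : Type*} [PseudoMetricSpace X] {f : X → X} (hf : Continuous f)
    (i : ℕ) (j k : ι) : Continuous fun x : ι → X => dist (f^[i] (x j)) (f^[i] (x k)) :=
  ((hf.iterate i).comp (continuous_apply j)).dist ((hf.iterate i).comp (continuous_apply k))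

variable {X ι : Type*} [LT ι]

/-- The times at which the orbits of the points `x j` are pairwise more than `δ` apart. As in
`DC1Scrambled`, each pair of indices is considered once. -/
def separationTimes [Dist X] (f : X → X) (δ : ℝ) (x : ι → X) : Set ℕ :=
  {i | ∀ j k, j < k → δ < dist (f^[i] (x j)) (f^[i] (x k))}

/-- The times at which the orbits of the points `x j` are pairwise less than `ε` apart. As in
`DC1Scrambled`, each pair of indices is considered once. -/
def proximityTimes [Dist X] (f : X → X) (ε : ℝ) (x : ι → X) : Set ℕ :=
  {i | ∀ j k, j < k → dist (f^[i] (x j)) (f^[i] (x k)) < ε}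

lemma proximityTimes_mono [Dist X] (f : X → X) (x : ι → X) {ε ε' : ℝ} (h : ε ≤ ε') :
    proximityTimes f ε x ⊆ proximityTimes f ε' x :=
  fun _ hi j k hjk => (hi j k hjk).trans_le h

lemma dc1Scrambled_iff_upperDensity [MetricSpace X] {f : X → X} {n : ℕ} {δ : ℝ} {x : Fin n → X} :
    DC1Scrambled f δ x ↔ upperDensity (separationTimes f δ x) = 1 ∧
      ∀ ε : ℝ, 0 < ε → upperDensity (proximityTimes f ε x) = 1 := by
  unfold DC1Scrambled upperDensity partialDensity separationTimes proximityTimes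
  simp only [Set.mem_ofPred_eq]

variable [Finite ι] [PseudoMetricSpace X] {f : X → X}

lemma isOpen_setOf_mem_separationTimes (hf : Continuous f) (δ : ℝ) (i : ℕ) :
    IsOpen {x : ι → X | i ∈ separationTimes f δ x} := by
  change IsOpen {x : ι → X | ∀ j k, j < k → δ < dist (f^[i] (x j)) (f^[i] (x k))}
  simp only [Set.ofPred_forall]
  exact isOpen_iInter_of_finite fun j => isOpen_iInter_of_finite fun k =>
    isOpen_iInter_of_finite fun _ => isOpen_lt continuous_const (continuous_dist_iterate hf i j k)

lemma isOpen_setOf_mem_proximityTimes (hf : Continuous f) (ε : ℝ) (i : ℕ) :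
    IsOpen {x : ι → X | i ∈ proximityTimes f ε x} := by
  change IsOpen {x : ι → X | ∀ j k, j < k → dist (f^[i] (x j)) (f^[i] (x k)) < ε}
  simp only [Set.ofPred_forall]
  exact isOpen_iInter_of_finite fun j => isOpen_iInter_of_finite fun k =>
    isOpen_iInter_of_finite fun _ => isOpen_lt (continuous_dist_iterate hf i j k) continuous_const

end OrbitTimes

section Shadowing

variable {X ι : Type*} [MetricSpace X] [BoundedSpace X] [Finite ι] {f : X → X}

lemma eventually_dist_iterate_lt_of_mem_Vs {x y : X} {ε η : ℝ} (hy : y ∈ Vs f x ε) (hη : ε < η) :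
    ∀ᶠ i in atTop, dist (f^[i] x) (f^[i] y) < η := by
  obtain ⟨C, hC⟩ := Metric.boundedSpace_iff.1 ‹BoundedSpace X›
  exact eventually_lt_of_limsup_lt (lt_of_le_of_lt hy hη) (isBoundedUnder_of ⟨C, fun i => hC _ _⟩)

lemma dense_setOf_eventually_dist_iterate_lt {p : ι → X} {ε η : ℝ}
    (hp : ∀ j, Dense (Vs f (p j) ε)) (hη : ε < η) :
    Dense {x : ι → X | ∀ᶠ i in atTop, ∀ j, dist (f^[i] (p j)) (f^[i] (x j)) < η} :=
  (dense_pi Set.univ fun j _ => hp j).mono fun x (hx : x ∈ Set.univ.pi _) =>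
    eventually_all.2 fun j => eventually_dist_iterate_lt_of_mem_Vs (hx j (Set.mem_univ j)) hη

variable [LT ι]

theorem eventually_residual_upperDensity_separationTimes (hf : Continuous f) {p : ι → X}
    (hp : ∀ j, ∀ ε : ℝ, 0 < ε → Dense (Vs f (p j) ε)) {c δ : ℝ} (hδ : δ < c)
    (hsep : ∀ i : ℕ, ∀ j k, j < k → c ≤ dist (f^[i] (p j)) (f^[i] (p k))) :
    ∀ᶠ x : ι → X in residual (ι → X), upperDensity (separationTimes f δ x) = 1 := by
  have hη : 0 < (c - δ) / 2 := half_pos (sub_pos.2 hδ)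
  have hshadow := dense_setOf_eventually_dist_iterate_lt
    (fun j => hp j _ (half_pos hη)) (half_lt_self hη)
  refine eventually_residual_upperDensity_eq_one (isOpen_setOf_mem_separationTimes hf δ)
    (hshadow.mono fun x hx => hx.mono fun i hi j k hjk => ?_)
  have htri := dist_triangle4_right (f^[i] (p j)) (f^[i] (p k)) (f^[i] (x j)) (f^[i] (x k))
  linarith [hsep i j k hjk, hi j, hi k]

lemma eventually_residual_upperDensity_proximityTimes (hf : Continuous f) {q : X}
    (hq : ∀ ε : ℝ, 0 < ε → Dense (Vs f q ε)) {ε : ℝ} (hε : 0 < ε) :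
    ∀ᶠ x : ι → X in residual (ι → X), upperDensity (proximityTimes f ε x) = 1 := by
  have hη : 0 < ε / 2 := half_pos hε
  have hshadow := dense_setOf_eventually_dist_iterate_lt
    (fun _ : ι => hq _ (half_pos hη)) (half_lt_self hη)
  refine eventually_residual_upperDensity_eq_one (isOpen_setOf_mem_proximityTimes hf ε)
    (hshadow.mono fun x hx => hx.mono fun i hi j k _ => ?_)
  have htri := dist_triangle_left (f^[i] (x j)) (f^[i] (x k)) (f^[i] q)
  linarith [hi j, hi k]

theorem eventually_residual_forall_upperDensity_proximityTimes (hf : Continuous f) {q : X}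
    (hq : ∀ ε : ℝ, 0 < ε → Dense (Vs f q ε)) :
    ∀ᶠ x : ι → X in residual (ι → X),
      ∀ ε : ℝ, 0 < ε → upperDensity (proximityTimes f ε x) = 1 := by
  have hrat : ∀ᶠ x : ι → X in residual (ι → X), ∀ r : ℚ, 0 < r →
      upperDensity (proximityTimes f r x) = 1 :=
    eventually_countable_forall.2 fun r => eventually_imp_distrib_left.2 fun hr =>
      eventually_residual_upperDensity_proximityTimes hf hq (Rat.cast_pos.2 hr)
  filter_upwards [hrat] with x hx ε hε
  obtain ⟨r, hr, hrε⟩ := exists_pos_rat_lt hε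
  exact upperDensity_eq_one_of_subset (proximityTimes_mono f x hrε.le) (hx r hr)

end Shadowing

lemma exists_injective_fin_of_natCast_lt_mk_add_one {X : Type*} {S : Set X} {n : ℕ}
    (h : (n : Cardinal) < Cardinal.mk S + 1) :
    ∃ p : Fin n → X, (∀ j, p j ∈ S) ∧ Function.Injective p := by
  have hle : (n : Cardinal) ≤ Cardinal.mk S :=
    le_of_not_gt fun hlt => h.not_ge (Cardinal.add_one_le_of_lt hlt)
  obtain ⟨e⟩ : Nonempty (Fin n ↪ S) := Cardinal.lift_mk_le'.1 (by simpa using hle)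
  exact ⟨fun j => e j, fun j => (e j).2, Subtype.val_injective.comp e.injective⟩

theorem dc1_of_distal_dense_general {X : Type*} [MetricSpace X] [BoundedSpace X]
    (f : X → X) (hf : Continuous f) (S : Set X)
    (hdistal : DistalSet f S)
    (hdense : ∀ x ∈ S, ∀ ε : ℝ, 0 < ε → Dense (Vs f x ε)) :
    ∀ n : ℕ, 2 ≤ n → (n : Cardinal) < Cardinal.mk S + 1 →
      ∃ δ : ℝ, 0 < δ ∧ {x : Fin n → X | DC1Scrambled f δ x} ∈ residual (Fin n → X) := by
  intro n hn hcard
  obtain ⟨p, hpS, hpinj⟩ := exists_injective_fin_of_natCast_lt_mk_add_one hcard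
  obtain ⟨c, hc, hsep⟩ := hdistal n hn p hpS hpinj
  have hp : ∀ j, ∀ ε : ℝ, 0 < ε → Dense (Vs f (p j) ε) := fun j => hdense (p j) (hpS j)
  refine ⟨c / 2, half_pos hc, ?_⟩
  filter_upwards [eventually_residual_upperDensity_separationTimes hf hp (half_lt_self hc) hsep,
    eventually_residual_forall_upperDensity_proximityTimes hf (hp ⟨0, by lia⟩)] with x hfar hnear
  exact dc1Scrambled_iff_upperDensity.2 ⟨hfar, hnear⟩

/-- Lemma 1.1: if `S` is a distal set for `f` and every `V_ε^s(x)`, `x ∈ S`,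
is dense, then for each `2 ≤ n < |S| + 1` the set of DC1-`n`-`δₙ`-scrambled tuples is
residual in `Xⁿ` for some `δₙ > 0`. -/
theorem dc1_of_distal_dense {X : Type*} [MetricSpace X] [CompactSpace X]
    (f : X → X) (hf : Continuous f) (S : Set X)
    (hdistal : DistalSet f S)
    (hdense : ∀ x ∈ S, ∀ ε : ℝ, 0 < ε → Dense (Vs f x ε)) :
    ∀ n : ℕ, 2 ≤ n → (n : Cardinal) < Cardinal.mk S + 1 →
      ∃ δ : ℝ, 0 < δ ∧ {x : Fin n → X | DC1Scrambled f δ x} ∈ residual (Fin n → X) :=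
  dc1_of_distal_dense_general f hf S hdistal hdense
end

section
/- Let X be a compact metric space, f : X → X a continuous map, Λ ⊆ X a closed f-invariant subset, and 𝓕 a Furstenberg family. Suppose (1) f|_Λ : Λ → Λ is minimal and equicontinuous, (2) for every ε > 0 the union ⋃_{x∈Λ} V_ε^s(x) is dense in X, (3) Λ ∩ R(f,𝓕) ≠ ∅, and (4) f is Δ(𝓕)*-transitive. Then for every integer n with 2 ≤ n < |Λ| + 1 there exists δ_n > 0 such that DC1_n^{δ_n}(X,f) is a residual subset of X^n. -/
/-!
Along a time `i` for which `f^[i]` is close to the identity on `Λ`, the points of `Λ` hardly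
move, while `f^[i]` may still move open subsets of `X` around. Minimality and equicontinuity turn
one almost-return of one point of `Λ` into such a time, so every difference of two return times of
an `𝓕`-recurrent point of `Λ` is one, and `Δ(𝓕)*`-transitivity connects any two open sets at one.

The heart of the matter is that for a single `a ∈ Λ` the points whose orbit is eventually `ε`-close
to that of `a` are dense. Given an open `U`, compactness provides finitely many `k` such that each
`z ∈ Λ` is carried close to `a` by one of the `f^[k]`. Starting from `W = U`, connecting `W`
successively to the sets `f^{-k}(U)` at near-identity times `i_k` shrinks it to a nonempty open `W`
with `f^[k + i_k] W ⊆ U` for each of these `k`. Some `y ∈ W` shadows some `z ∈ Λ`; if `f^[k] z` is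
close to `a`, then `f^[k + i_k] y ∈ U` shadows `f^[k + i_k] z`, which is still close to `a`.

Hence densely many tuples shadow a constant tuple, and so are eventually close together; and densely
many shadow `n` distinct points of `Λ`, and so are eventually separated, because `Λ` is distal. By a
Baire argument the generic tuple does both, along sets of times of upper density one.
-/

open Filter Topology

/-! ### Upper density one -/

section UpperDensity

open Classical in
/-- The proportion of the times `i < m` that lie in `S`, equal to `0` at `m = 0`. -/
noncomputable def timeFreq (S : Set ℕ) (m : ℕ) : ℝ :=
  ((Finset.range m).filter (· ∈ S)).card / m

/-- Upper density one, the notion of largeness of sets of times in the definition of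
distributional chaos. -/
def FullUpperDensity (S : Set ℕ) : Prop :=
  limsup (timeFreq S) atTop = 1

variable {S T : Set ℕ}

lemma timeFreq_nonneg (S : Set ℕ) (m : ℕ) : 0 ≤ timeFreq S m := by
  unfold timeFreq
  positivity

lemma timeFreq_le_one (S : Set ℕ) (m : ℕ) : timeFreq S m ≤ 1 := by
  classical
  refine div_le_one_of_le₀ (Nat.cast_le.2 ?_) m.cast_nonneg
  exact (Finset.card_filter_le _ _).trans_eq (Finset.card_range m)

lemma timeFreq_mono {m : ℕ} (h : ∀ i < m, i ∈ S → i ∈ T) : timeFreq S m ≤ timeFreq T m := by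
  refine div_le_div_of_nonneg_right (Nat.cast_le.2 (Finset.card_le_card fun i => ?_)) m.cast_nonneg
  simp only [Finset.mem_filter, Finset.mem_range]
  exact fun hi => ⟨hi.1, h i hi.1 hi.2⟩

lemma tendsto_timeFreq_one (hS : S ∈ atTop) : Tendsto (timeFreq S) atTop (𝓝 1) := by
  classical
  obtain ⟨M, hM⟩ := mem_atTop_sets.1 hS
  have hlower : ∀ᶠ m : ℕ in atTop, 1 - (M : ℝ) / m ≤ timeFreq S m := by
    filter_upwards [eventually_gt_atTop 0] with m hm
    have hcard : m - M ≤ ((Finset.range m).filter (· ∈ S)).card := by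
      rw [← Nat.card_Ico]
      refine Finset.card_le_card fun i hi => ?_
      rw [Finset.mem_Ico] at hi
      exact Finset.mem_filter.2 ⟨Finset.mem_range.2 hi.2, hM i hi.1⟩
    have hm' : (0 : ℝ) < m := Nat.cast_pos.2 hm
    rw [one_sub_div hm'.ne']
    refine div_le_div_of_nonneg_right ?_ hm'.le
    rw [sub_le_iff_le_add]
    exact_mod_cast Nat.sub_le_iff_le_add.1 hcard
  refine tendsto_of_tendsto_of_tendsto_of_le_of_le' ?_ tendsto_const_nhds hlower
    (Eventually.of_forall (timeFreq_le_one S))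
  simpa using tendsto_const_nhds.sub (tendsto_const_div_atTop_nhds_zero_nat (M : ℝ))

lemma fullUpperDensity_iff :
    FullUpperDensity S ↔ ∀ c < (1 : ℝ), ∃ᶠ m in atTop, c < timeFreq S m := by
  have hbdd : IsBoundedUnder (· ≤ ·) atTop (timeFreq S) := isBoundedUnder_of ⟨1, timeFreq_le_one S⟩
  have hcobdd : IsCoboundedUnder (· ≤ ·) atTop (timeFreq S) :=
    (isBoundedUnder_of ⟨0, timeFreq_nonneg S⟩ :
      IsBoundedUnder (· ≥ ·) atTop (timeFreq S)).isCoboundedUnder_le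
  have hle : limsup (timeFreq S) atTop ≤ 1 :=
    limsup_le_of_le hcobdd (Eventually.of_forall (timeFreq_le_one S))
  rw [FullUpperDensity, ← hle.ge_iff_eq, le_limsup_iff hcobdd hbdd]

lemma FullUpperDensity.mono (h : FullUpperDensity S) (hST : S ⊆ T) : FullUpperDensity T :=
  fullUpperDensity_iff.2 fun c hc => (fullUpperDensity_iff.1 h c hc).mono fun _ hm =>
    hm.trans_le (timeFreq_mono fun _ _ hi => hST hi)

lemma fullUpperDensity_of_mem_atTop (hS : S ∈ atTop) : FullUpperDensity S :=
  (tendsto_timeFreq_one hS).limsup_eq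

variable {Y : Type*} [TopologicalSpace Y] {S : Y → Set ℕ}

lemma isOpen_lt_timeFreq (hopen : ∀ i, IsOpen {y | i ∈ S y}) (c : ℝ) (m : ℕ) :
    IsOpen {y | c < timeFreq (S y) m} := by
  refine isOpen_iff_mem_nhds.2 fun y hy => ?_
  have hpersist : ∀ᶠ z in 𝓝 y, ∀ i ∈ Set.Iio m, i ∈ S y → i ∈ S z := by
    refine (eventually_all_finite (Set.finite_Iio m)).2 fun i _ => ?_
    by_cases hi : i ∈ S y
    · filter_upwards [(hopen i).mem_nhds hi] with z hz _ using hz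
    · exact Eventually.of_forall fun _ h => absurd h hi
  filter_upwards [hpersist] with z hz using lt_of_lt_of_le hy (timeFreq_mono hz)

lemma eventually_residual_fullUpperDensity (hopen : ∀ i, IsOpen {y | i ∈ S y})
    (hdense : Dense {y | FullUpperDensity (S y)}) :
    ∀ᶠ y in residual Y, FullUpperDensity (S y) := by
  have hfreq : ∀ᶠ y in residual Y,
      ∀ k M : ℕ, ∃ m ≥ M, 1 - 1 / ((k : ℝ) + 1) < timeFreq (S y) m := by
    refine eventually_countable_forall.2 fun k => eventually_countable_forall.2 fun M =>
      residual_of_dense_open ?_ (hdense.mono fun y hy => ?_)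
    · simp only [Set.ofPred_exists, Set.ofPred_and]
      exact isOpen_iUnion fun m => isOpen_const.inter (isOpen_lt_timeFreq hopen _ m)
    · exact frequently_atTop.1
        (fullUpperDensity_iff.1 hy _ (sub_lt_self 1 Nat.one_div_pos_of_nat)) M
  filter_upwards [hfreq] with y hy
  refine fullUpperDensity_iff.2 fun c hc => frequently_atTop.2 fun M => ?_
  obtain ⟨k, hk⟩ := exists_nat_one_div_lt (sub_pos.2 hc)
  obtain ⟨m, hm, hlt⟩ := hy k M
  exact ⟨m, hm, by linarith⟩

end UpperDensity

/-! ### Relations between the coordinates of a tuple -/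

section PairTimes

variable {X : Type*} {n : ℕ}

/-- The times at which any two coordinates of the tuple `x` are related by `R`. It unifies the two
conditions in the definition of DC1-scrambled tuples. -/
def pairTimes (f : X → X) (R : X → X → Prop) (x : Fin n → X) : Set ℕ :=
  {i | ∀ j k : Fin n, j < k → R (f^[i] (x j)) (f^[i] (x k))}

lemma eventually_residual_fullUpperDensity_pairTimes [TopologicalSpace X] {f : X → X}
    (hf : Continuous f) {R : X → X → Prop} (hR : IsOpen {p : X × X | R p.1 p.2})
    (hdense : Dense {x : Fin n → X | pairTimes f R x ∈ atTop}) :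
    ∀ᶠ x : Fin n → X in residual (Fin n → X), FullUpperDensity (pairTimes f R x) := by
  refine eventually_residual_fullUpperDensity (fun i => ?_)
    (hdense.mono fun x hx => fullUpperDensity_of_mem_atTop hx)
  have hcont : ∀ j, Continuous fun x : Fin n → X => f^[i] (x j) := fun j =>
    (hf.iterate i).comp (continuous_apply j)
  change IsOpen {x : Fin n → X | ∀ j k : Fin n, j < k → R (f^[i] (x j)) (f^[i] (x k))}
  simp only [Set.ofPred_forall]
  exact isOpen_iInter_of_finite fun j => isOpen_iInter_of_finite fun k =>
    isOpen_iInter_of_finite fun (_ : j < k) => hR.preimage ((hcont j).prodMk (hcont k))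

variable [MetricSpace X] {f : X → X}

lemma dc1Scrambled_iff {δ : ℝ} {x : Fin n → X} :
    DC1Scrambled f δ x ↔ FullUpperDensity (pairTimes f (fun u v => δ < dist u v) x) ∧
      ∀ ε : ℝ, 0 < ε → FullUpperDensity (pairTimes f (fun u v => dist u v < ε) x) := by
  unfold DC1Scrambled FullUpperDensity timeFreq pairTimes
  congr!

lemma eventually_residual_fullUpperDensity_lt_dist (hf : Continuous f) {δ : ℝ}
    (hdense : Dense {x : Fin n → X | pairTimes f (fun u v => δ < dist u v) x ∈ atTop}) :
    ∀ᶠ x : Fin n → X in residual (Fin n → X),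
      FullUpperDensity (pairTimes f (fun u v => δ < dist u v) x) :=
  eventually_residual_fullUpperDensity_pairTimes hf
    (isOpen_lt continuous_const continuous_dist) hdense

lemma eventually_residual_forall_fullUpperDensity_dist_lt (hf : Continuous f)
    (hdense : ∀ ε : ℝ, 0 < ε →
      Dense {x : Fin n → X | pairTimes f (fun u v => dist u v < ε) x ∈ atTop}) :
    ∀ᶠ x : Fin n → X in residual (Fin n → X), ∀ ε : ℝ, 0 < ε →
      FullUpperDensity (pairTimes f (fun u v => dist u v < ε) x) := by
  have hseq : ∀ᶠ x : Fin n → X in residual (Fin n → X), ∀ r : ℕ,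
      FullUpperDensity (pairTimes f (fun u v => dist u v < 1 / ((r : ℝ) + 1)) x) :=
    eventually_countable_forall.2 fun r => eventually_residual_fullUpperDensity_pairTimes hf
      (isOpen_lt continuous_dist continuous_const) (hdense _ Nat.one_div_pos_of_nat)
  filter_upwards [hseq] with x hx ε hε
  obtain ⟨r, hr⟩ := exists_nat_one_div_lt hε
  exact (hx r).mono fun i hi j k hjk => (hi j k hjk).trans hr

end PairTimes

/-! ### Shadowing -/

section Shadowing

variable {X : Type*} [MetricSpace X] {f : X → X}

/-- The points whose orbit is eventually `ε`-close to that of `x`. In a bounded space it plays the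
role of `Vs f x ε`, without a `limsup`. -/
def stableBall (f : X → X) (x : X) (ε : ℝ) : Set X :=
  {y | ∀ᶠ i in atTop, dist (f^[i] x) (f^[i] y) < ε}

lemma Vs_subset_stableBall [BoundedSpace X] (x : X) {ε ε' : ℝ} (h : ε < ε') :
    Vs f x ε ⊆ stableBall f x ε' := fun _ hy =>
  eventually_lt_of_limsup_lt (lt_of_le_of_lt hy h) <|
    isBoundedUnder_of ⟨Metric.diam (Set.univ : Set X), fun _ =>
      Metric.dist_le_diam_of_mem (Bornology.IsBounded.all _) trivial trivial⟩

lemma dense_iUnion_stableBall_of_Vs [BoundedSpace X] {Λ : Set X}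
    (h : ∀ ε : ℝ, 0 < ε → Dense (⋃ x ∈ Λ, Vs f x ε)) (ε : ℝ) (hε : 0 < ε) :
    Dense (⋃ x ∈ Λ, stableBall f x ε) :=
  (h (ε / 2) (half_pos hε)).mono <|
    Set.iUnion₂_mono fun x _ => Vs_subset_stableBall x (half_lt_self hε)

lemma iterate_mem_stableBall {x y : X} {ε : ℝ} (h : y ∈ stableBall f x ε) (m : ℕ) :
    f^[m] y ∈ stableBall f (f^[m] x) ε := by
  filter_upwards [(tendsto_add_atTop_nat m).eventually h] with i hi
  simpa only [Function.iterate_add_apply] using hi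

lemma stableBall_subset_stableBall_add {x y : X} {ε ε' : ℝ}
    (h : ∀ i : ℕ, dist (f^[i] x) (f^[i] y) ≤ ε) :
    stableBall f y ε' ⊆ stableBall f x (ε + ε') := by
  intro z hz
  filter_upwards [hz] with i hi
  exact (dist_triangle _ (f^[i] y) _).trans_lt (add_lt_add_of_le_of_lt (h i) hi)

lemma pi_stableBall_subset_pairTimes_dist_lt {n : ℕ} (p : X) (ε : ℝ) :
    (Set.univ.pi fun _ : Fin n => stableBall f p (ε / 2)) ⊆
      {x | pairTimes f (fun u v => dist u v < ε) x ∈ atTop} := by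
  intro x hx
  filter_upwards [eventually_all.2 fun j => hx j trivial] with i hi j k _
  linarith [dist_triangle_left (f^[i] (x j)) (f^[i] (x k)) (f^[i] p), hi j, hi k]

lemma pi_stableBall_subset_pairTimes_lt_dist {n : ℕ} {a : Fin n → X} {c : ℝ}
    (hsep : ∀ i : ℕ, ∀ j k : Fin n, j < k → c ≤ dist (f^[i] (a j)) (f^[i] (a k))) :
    (Set.univ.pi fun j => stableBall f (a j) (c / 4)) ⊆
      {x | pairTimes f (fun u v => c / 2 < dist u v) x ∈ atTop} := by
  intro x hx
  filter_upwards [eventually_all.2 fun j => hx j trivial] with i hi j k hjk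
  have htri := dist_triangle4_right (f^[i] (a j)) (f^[i] (a k)) (f^[i] (x j)) (f^[i] (x k))
  linarith [hsep i j k hjk, hi j, hi k]

end Shadowing

/-! ### Minimal equicontinuous sets -/

section MinimalOn

variable {X : Type*} [TopologicalSpace X] {f : X → X} {Λ : Set X}

lemma MinimalOn.iterate_mem (hmin : MinimalOn f Λ) {x : X} (hx : x ∈ Λ) (i : ℕ) :
    f^[i] x ∈ Λ := by
  rw [← hmin x hx]
  exact subset_closure ⟨i, rfl⟩

lemma MinimalOn.exists_iterate_mem (hmin : MinimalOn f Λ) {x a : X} (hx : x ∈ Λ) (ha : a ∈ Λ)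
    {U : Set X} (hU : IsOpen U) (haU : a ∈ U) : ∃ k : ℕ, f^[k] x ∈ U := by
  rw [← hmin x hx] at ha
  obtain ⟨_, hkU, k, rfl⟩ := mem_closure_iff.1 ha U hU haU
  exact ⟨k, hkU⟩

lemma MinimalOn.exists_finset_iterate_mem (hmin : MinimalOn f Λ) (hf : Continuous f)
    (hΛ : IsCompact Λ) {a : X} (ha : a ∈ Λ) {U : Set X} (hU : IsOpen U) (haU : a ∈ U) :
    ∃ K : Finset ℕ, ∀ x ∈ Λ, ∃ k ∈ K, f^[k] x ∈ U := by
  obtain ⟨K, hK⟩ := hΛ.elim_finite_subcover (fun k : ℕ => f^[k] ⁻¹' U)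
    (fun k => hU.preimage (hf.iterate k))
    fun x hx => Set.mem_iUnion.2 (hmin.exists_iterate_mem hx ha hU haU)
  exact ⟨K, fun x hx => by simpa using hK hx⟩

end MinimalOn

section NearId

variable {X : Type*} [MetricSpace X] {f : X → X} {Λ : Set X}

/-- The times `i` at which `f^[i]` is `η`-close to the identity on `Λ`. -/
def nearIdTimes (f : X → X) (Λ : Set X) (η : ℝ) : Set ℕ :=
  {i | ∀ x ∈ Λ, dist (f^[i] x) x ≤ η}

lemma exists_forall_mem_nearIdTimes (hf : Continuous f) (hmin : MinimalOn f Λ)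
    (heq : EquicontOnSet f Λ) {η : ℝ} (hη : 0 < η) :
    ∃ δ : ℝ, 0 < δ ∧ ∀ p ∈ Λ, ∀ i : ℕ, dist (f^[i] p) p ≤ δ → i ∈ nearIdTimes f Λ η := by
  obtain ⟨δ, hδ, hequi⟩ := heq η hη
  refine ⟨δ, hδ, fun p hp i hi => ?_⟩
  have hclosed : IsClosed {x | dist (f^[i] x) x ≤ η} :=
    isClosed_le ((hf.iterate i).dist continuous_id) continuous_const
  have horbit : (Set.range fun m : ℕ => f^[m] p) ⊆ {x | dist (f^[i] x) x ≤ η} := by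
    rintro _ ⟨m, rfl⟩
    have := hequi _ (hmin.iterate_mem hp i) p hp hi m
    rwa [(Function.Commute.iterate_iterate_self f m i).eq p] at this
  intro x hx
  rw [← hmin p hp] at hx
  exact closure_minimal horbit hclosed hx

lemma exists_add_mem_nearIdTimes (hf : Continuous f) (hmin : MinimalOn f Λ)
    (heq : EquicontOnSet f Λ) (hne : Λ.Nonempty) {η : ℝ} (hη : 0 < η) (i : ℕ) :
    ∃ m : ℕ, m + i ∈ nearIdTimes f Λ η := by
  obtain ⟨p, hp⟩ := hne
  obtain ⟨δ, hδ, hnear⟩ := exists_forall_mem_nearIdTimes hf hmin heq hη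
  obtain ⟨m, hm⟩ := hmin.exists_iterate_mem (hmin.iterate_mem hp i) hp Metric.isOpen_ball
    (Metric.mem_ball_self hδ)
  rw [← Function.iterate_add_apply] at hm
  exact ⟨m, hnear p hp _ (Metric.mem_ball.1 hm).le⟩

/-- Closeness at time `i` persists until the next near-identity time, which undoes the motion. -/
lemma exists_forall_dist_le_of_dist_iterate_le (hf : Continuous f) (hmin : MinimalOn f Λ)
    (heq : EquicontOnSet f Λ) {r : ℝ} (hr : 0 < r) :
    ∃ δ : ℝ, 0 < δ ∧ ∀ a ∈ Λ, ∀ b ∈ Λ, ∀ i : ℕ, dist (f^[i] a) (f^[i] b) ≤ δ → dist a b ≤ r := by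
  obtain ⟨δ, hδ, hequi⟩ := heq (r / 3) (by positivity)
  refine ⟨δ, hδ, fun a ha b hb i hi => ?_⟩
  obtain ⟨m, hm⟩ := exists_add_mem_nearIdTimes hf hmin heq ⟨a, ha⟩ (η := r / 3) (by positivity) i
  have hclose := hequi _ (hmin.iterate_mem ha i) _ (hmin.iterate_mem hb i) hi m
  simp only [← Function.iterate_add_apply] at hclose
  have htri := dist_triangle4_left (f^[m + i] a) (f^[m + i] b) a b
  linarith [hm a ha, hm b hb]

lemma distalSet_of_minimalOn_of_equicontOnSet (hf : Continuous f) (hmin : MinimalOn f Λ)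
    (heq : EquicontOnSet f Λ) : DistalSet f Λ := by
  intro n _ a ha hinj
  have hpair : ∀ j k : Fin n, j < k →
      ∀ᶠ c in 𝓝[>] (0 : ℝ), ∀ i : ℕ, c ≤ dist (f^[i] (a j)) (f^[i] (a k)) := by
    intro j k hjk
    have hdist : 0 < dist (a j) (a k) := dist_pos.2 (hinj.ne hjk.ne)
    obtain ⟨δ, hδ, hsep⟩ := exists_forall_dist_le_of_dist_iterate_le hf hmin heq (half_pos hdist)
    filter_upwards [Ioc_mem_nhdsGT hδ] with c hc i
    by_contra! hlt
    exact (half_lt_self hdist).not_ge (hsep _ (ha j) _ (ha k) i (hlt.le.trans hc.2))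
  have hall : ∀ᶠ c in 𝓝[>] (0 : ℝ), ∀ j k : Fin n, j < k →
      ∀ i : ℕ, c ≤ dist (f^[i] (a j)) (f^[i] (a k)) := by
    simpa only [eventually_all] using hpair
  obtain ⟨c, hc, hpos⟩ := (hall.and self_mem_nhdsWithin).exists
  exact ⟨c, hpos, fun i j k hjk => hc j k hjk i⟩

lemma nearIdTimes_mem_deltaFamily (hf : Continuous f) (hmin : MinimalOn f Λ)
    (heq : EquicontOnSet f Λ) {F : Set (Set ℕ)} (hrec : (Λ ∩ FRecurrent f F).Nonempty)
    (η : ℝ) (hη : 0 < η) : nearIdTimes f Λ η ∈ deltaFamily F := by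
  obtain ⟨p, hpΛ, hp⟩ := hrec
  obtain ⟨δ, hδ, hnear⟩ := exists_forall_mem_nearIdTimes hf hmin heq hη
  refine ⟨retTimes f p (δ / 2), hp _ (half_pos hδ), by simpa [retTimes] using (half_pos hδ).le, ?_⟩
  rintro _ ⟨j, hj : dist p (f^[j] p) ≤ δ / 2, k, hk : dist p (f^[k] p) ≤ δ / 2, hjk, rfl⟩
  refine hnear (f^[j] p) (hmin.iterate_mem hpΛ j) _ ?_
  rw [← Function.iterate_add_apply, Nat.sub_add_cancel hjk]
  linarith [dist_triangle_left (f^[k] p) (f^[j] p) p]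

end NearId

/-! ### Transitivity along near-identity times -/

section Transitive

lemma FTransitive.isTransitive {X : Type*} [TopologicalSpace X] {f : X → X} {G : Set (Set ℕ)}
    (htrans : FTransitive f (dualFamily G)) (hG : G.Nonempty) : IsTransitive f := by
  intro U V hU hV hUne hVne
  obtain ⟨B, hB⟩ := hG
  obtain ⟨i, hi, -⟩ := htrans U V hU hV hUne hVne B hB
  exact ⟨i, hi⟩

/-- A second point is used to exclude the transition time `0`. -/
lemma IsTransitive.denseRange {Z : Type*} [TopologicalSpace Z] [T2Space Z] {h : Z → Z}
    (hh : IsTransitive h) : DenseRange h := by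
  obtain hZ | hZ := subsingleton_or_nontrivial Z
  · exact fun z => subset_closure ⟨z, Subsingleton.elim _ _⟩
  refine dense_iff_inter_open.2 fun V hV ⟨v, hv⟩ => ?_
  obtain ⟨u, huv⟩ := exists_ne v
  obtain ⟨A, B, hA, hB, huA, hvB, hAB⟩ := t2_separation huv
  obtain ⟨i, z, hzA, hzV, hzB⟩ := hh A (V ∩ B) hA (hV.inter hB) ⟨u, huA⟩ ⟨v, hv, hvB⟩
  cases i with
  | zero => exact absurd hzB (Set.disjoint_left.1 hAB hzA)
  | succ i => exact ⟨_, hzV, h^[i] z, (Function.iterate_succ_apply' h i z).symm⟩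

lemma denseRange_iterate {Z : Type*} [TopologicalSpace Z] {h : Z → Z} (hh : DenseRange h)
    (hcont : Continuous h) : ∀ k : ℕ, DenseRange h^[k]
  | 0 => Function.surjective_id.denseRange
  | k + 1 => (denseRange_iterate hh hcont k).comp hh (hcont.iterate k)

variable {X : Type*} [MetricSpace X] {f : X → X} {Λ : Set X} {G : Set (Set ℕ)}

lemma exists_isOpen_forall_mapsTo_iterate (hf : Continuous f)
    (hG : ∀ η : ℝ, 0 < η → nearIdTimes f Λ η ∈ G) (htrans : FTransitive f (dualFamily G))
    {U : Set X} (hU : IsOpen U) (hUne : U.Nonempty) {η : ℝ} (hη : 0 < η) (K : Finset ℕ) :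
    ∃ W : Set X, IsOpen W ∧ W.Nonempty ∧
      ∀ k ∈ K, ∃ i ∈ nearIdTimes f Λ η, Set.MapsTo f^[k + i] W U := by
  have hdense : DenseRange f := (htrans.isTransitive ⟨_, hG η hη⟩).denseRange
  induction K using Finset.induction_on with
  | empty => exact ⟨U, hU, hUne, by simp⟩
  | insert k K _ ih =>
    obtain ⟨W, hW, hWne, hK⟩ := ih
    have hkU : IsOpen (f^[k] ⁻¹' U) := hU.preimage (hf.iterate k)
    obtain ⟨i, ⟨x, hxW, hxU⟩, hi⟩ := htrans W (f^[k] ⁻¹' U) hW hkU hWne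
      ((denseRange_iterate hdense hf k).exists_mem_open hU hUne) _ (hG η hη)
    refine ⟨W ∩ f^[i] ⁻¹' (f^[k] ⁻¹' U), hW.inter (hkU.preimage (hf.iterate i)), ⟨x, hxW, hxU⟩,
      (Finset.forall_mem_insert _ _ _).2 ⟨⟨i, hi, ?_⟩, ?_⟩⟩
    · rw [Function.iterate_add]
      exact fun y hy => hy.2
    · intro l hl
      obtain ⟨i', hi', hmaps⟩ := hK l hl
      exact ⟨i', hi', hmaps.mono_left Set.inter_subset_left⟩

lemma dense_stableBall (hf : Continuous f) (hΛ : IsCompact Λ) (hmin : MinimalOn f Λ)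
    (heq : EquicontOnSet f Λ) (hunion : ∀ ε : ℝ, 0 < ε → Dense (⋃ x ∈ Λ, stableBall f x ε))
    (hG : ∀ η : ℝ, 0 < η → nearIdTimes f Λ η ∈ G) (htrans : FTransitive f (dualFamily G))
    {a : X} (ha : a ∈ Λ) {ε : ℝ} (hε : 0 < ε) : Dense (stableBall f a ε) := by
  refine dense_iff_inter_open.2 fun U hU hUne => ?_
  obtain ⟨δ, hδ, hequi⟩ := heq (ε / 2) (half_pos hε)
  obtain ⟨K, hK⟩ := hmin.exists_finset_iterate_mem hf hΛ ha Metric.isOpen_ball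
    (Metric.mem_ball_self (half_pos hδ))
  obtain ⟨W, hW, hWne, hmaps⟩ :=
    exists_isOpen_forall_mapsTo_iterate hf hG htrans hU hUne (half_pos hδ) K
  obtain ⟨y, hyW, hy⟩ := (hunion (ε / 2) (half_pos hε)).inter_open_nonempty W hW hWne
  obtain ⟨z, hz, hyz⟩ := Set.mem_iUnion₂.1 hy
  obtain ⟨k, hkK, hk⟩ := hK z hz
  obtain ⟨i, hi, hiU⟩ := hmaps k hkK
  have hclose : dist a (f^[k + i] z) ≤ δ := by
    have hki : dist (f^[k + i] z) (f^[k] z) ≤ δ / 2 := by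
      rw [add_comm, Function.iterate_add_apply]
      exact hi _ (hmin.iterate_mem hz k)
    linarith [dist_triangle_right a (f^[k + i] z) (f^[k] z), Metric.mem_ball'.1 hk]
  have hsubset := stableBall_subset_stableBall_add (ε' := ε / 2)
    (hequi a ha _ (hmin.iterate_mem hz (k + i)) hclose)
  rw [add_halves] at hsubset
  exact ⟨f^[k + i] y, hiU hyW, hsubset (iterate_mem_stableBall hyz (k + i))⟩

end Transitive

lemma exists_injective_of_lt_mk_add_one {α : Type*} {s : Set α} {n : ℕ}
    (h : (n : Cardinal) < Cardinal.mk s + 1) :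
    ∃ a : Fin n → α, (∀ j, a j ∈ s) ∧ Function.Injective a := by
  have hle : (n : Cardinal) ≤ Cardinal.mk s :=
    Order.lt_succ_iff.1 (h.trans_le (Cardinal.add_one_le_of_lt (Order.lt_succ _)))
  obtain ⟨e⟩ : Nonempty (Fin n ↪ s) := Cardinal.lift_mk_le'.1 (by simpa using hle)
  exact ⟨fun j => e j, fun j => (e j).2, Subtype.val_injective.comp e.injective⟩

theorem dc1_furstenberg_general {X : Type*} [MetricSpace X] {f : X → X} (hf : Continuous f)
    {Λ : Set X} (hΛ : IsCompact Λ) (hmin : MinimalOn f Λ) (heq : EquicontOnSet f Λ)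
    (hunion : ∀ ε : ℝ, 0 < ε → Dense (⋃ x ∈ Λ, stableBall f x ε)) {G : Set (Set ℕ)}
    (hG : ∀ η : ℝ, 0 < η → nearIdTimes f Λ η ∈ G) (htrans : FTransitive f (dualFamily G)) :
    ∀ n : ℕ, 2 ≤ n → (n : Cardinal) < Cardinal.mk Λ + 1 →
      ∃ δ : ℝ, 0 < δ ∧ {x : Fin n → X | DC1Scrambled f δ x} ∈ residual (Fin n → X) := by
  intro n hn hcard
  obtain ⟨a, ha, hinj⟩ := exists_injective_of_lt_mk_add_one hcard
  obtain ⟨c, hc, hsep⟩ := distalSet_of_minimalOn_of_equicontOnSet hf hmin heq n hn a ha hinj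
  have hdense : ∀ b : Fin n → X, (∀ j, b j ∈ Λ) → ∀ ε : ℝ, 0 < ε →
      Dense (Set.univ.pi fun j => stableBall f (b j) ε) := fun b hb ε hε =>
    dense_pi _ fun j _ => dense_stableBall hf hΛ hmin heq hunion hG htrans (hb j) hε
  have hfar := eventually_residual_fullUpperDensity_lt_dist hf <|
    (hdense a ha (c / 4) (by positivity)).mono (pi_stableBall_subset_pairTimes_lt_dist hsep)
  have hp := ha ⟨0, by omega⟩
  have hclose := eventually_residual_forall_fullUpperDensity_dist_lt hf fun ε hε =>
    (hdense _ (fun _ => hp) (ε / 2) (half_pos hε)).mono (pi_stableBall_subset_pairTimes_dist_lt _ ε)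
  refine ⟨c / 2, half_pos hc, ?_⟩
  filter_upwards [hfar, hclose] with x hxfar hxclose using dc1Scrambled_iff.2 ⟨hxfar, hxclose⟩

/-- Corollary 1.2: the Furstenberg-family version of Theorem 1.1. -/
theorem dc1_furstenberg {X : Type*} [MetricSpace X] [CompactSpace X]
    (f : X → X) (hf : Continuous f) (Λ : Set X)
    (hclosed : IsClosed Λ) (hinv : Set.MapsTo f Λ Λ)
    (F : Set (Set ℕ))
    (hup : ∀ A B : Set ℕ, A ∈ F → A ⊆ B → B ∈ F)
    (hne : F.Nonempty) (hproper : F ≠ Set.univ)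
    (hmin : MinimalOn f Λ) (heq : EquicontOnSet f Λ)
    (hunion : ∀ ε : ℝ, 0 < ε → Dense (⋃ x ∈ Λ, Vs f x ε))
    (hrec : (Λ ∩ FRecurrent f F).Nonempty)
    (htrans : FTransitive f (dualFamily (deltaFamily F))) :
    ∀ n : ℕ, 2 ≤ n → (n : Cardinal) < Cardinal.mk Λ + 1 →
      ∃ δ : ℝ, 0 < δ ∧ {x : Fin n → X | DC1Scrambled f δ x} ∈ residual (Fin n → X) :=
  dc1_furstenberg_general hf hclosed.isCompact hmin heq (dense_iUnion_stableBall_of_Vs hunion)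
    (nearIdTimes_mem_deltaFamily hf hmin heq hrec) htrans
end

section
/- Let X be a compact metric space, f : X → X a continuous map, and Λ ⊆ X a closed f-invariant subset such that f|_Λ : Λ → Λ is minimal and equicontinuous. Then for every Furstenberg family 𝓕, if Λ ∩ R(f,𝓕) ≠ ∅ then Λ ⊆ R(f,𝓕). -/
/-!
The set of `F`-recurrent points of `Λ` is forward invariant, because by continuity a close return
of `x` gives a close return of `f x`. It is also closed relative to `Λ`, because by equicontinuity
the orbits of nearby points of `Λ` have the same return times up to a small loss of precision. In a
minimal system every nonempty forward invariant subset is dense, so this set is all of `Λ` as soon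
as it is nonempty.
-/

open Filter Topology

section Minimal

variable {X : Type*} [TopologicalSpace X] {f : X → X} {Λ S : Set X}

theorem MinimalOn.mapsTo (hmin : MinimalOn f Λ) : Set.MapsTo f Λ Λ := fun x hx =>
  (hmin x hx).subset (subset_closure ⟨1, rfl⟩)

theorem MinimalOn.subset_closure_of_mapsTo (hmin : MinimalOn f Λ) (hSΛ : S ⊆ Λ)
    (hS : S.Nonempty) (hfS : Set.MapsTo f S S) : Λ ⊆ closure S := by
  obtain ⟨x, hx⟩ := hS
  have orbit_subset : (Set.range fun i : ℕ => f^[i] x) ⊆ S :=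
    Set.range_subset_iff.2 fun i => hfS.iterate i hx
  exact (hmin x (hSΛ hx)).ge.trans (closure_mono orbit_subset)

end Minimal

section Recurrent

variable {X : Type*} [MetricSpace X] {f : X → X} {Λ : Set X} {F : Set (Set ℕ)}

theorem EquicontOnSet.continuousOn (heq : EquicontOnSet f Λ) : ContinuousOn f Λ := by
  refine Metric.continuousOn_iff.2 fun x hx ε hε => ?_
  obtain ⟨δ, hδ, hclose⟩ := heq (ε / 2) (half_pos hε)
  exact ⟨δ, hδ, fun y hy hyx => (hclose y hy x hx hyx.le 1).trans_lt (half_lt_self hε)⟩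

theorem retTimes_subset_retTimes_add {x y : X} {ε : ℝ}
    (hxy : ∀ i : ℕ, dist (f^[i] x) (f^[i] y) ≤ ε) (r : ℝ) :
    retTimes f x r ⊆ retTimes f y (ε + r + ε) := fun i (hi : dist x (f^[i] x) ≤ r) =>
  calc dist y (f^[i] y)
      ≤ dist y x + dist x (f^[i] x) + dist (f^[i] x) (f^[i] y) := dist_triangle4 ..
    _ ≤ ε + r + ε := add_le_add_three ((dist_comm y x).trans_le (hxy 0)) hi (hxy i)

theorem mapsTo_inter_fRecurrent (hF : IsUpperSet F) (hf : ContinuousOn f Λ)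
    (hΛ : Set.MapsTo f Λ Λ) : Set.MapsTo f (Λ ∩ FRecurrent f F) (Λ ∩ FRecurrent f F) := by
  rintro x ⟨hxΛ, hx⟩
  refine ⟨hΛ hxΛ, fun ε hε => ?_⟩
  obtain ⟨δ, hδ, hclose⟩ := Metric.continuousOn_iff.1 hf x hxΛ ε hε
  have return_map : retTimes f x (δ / 2) ⊆ retTimes f (f x) ε := fun i hi => by
    have return_lt : dist (f^[i] x) x < δ :=
      (dist_comm _ _).trans_lt (lt_of_le_of_lt hi (half_lt_self hδ))
    calc dist (f x) (f^[i] (f x))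
        = dist (f (f^[i] x)) (f x) := by
          rw [dist_comm, ← Function.iterate_succ_apply, Function.iterate_succ_apply']
      _ ≤ ε := (hclose _ (hΛ.iterate i hxΛ) return_lt).le
  exact hF return_map (hx (δ / 2) (half_pos hδ))

theorem EquicontOnSet.inter_closure_subset_fRecurrent (heq : EquicontOnSet f Λ)
    (hF : IsUpperSet F) : Λ ∩ closure (Λ ∩ FRecurrent f F) ⊆ FRecurrent f F := by
  rintro y ⟨hyΛ, hy⟩ ε hε
  obtain ⟨δ, hδ, hclose⟩ := heq (ε / 3) (by positivity)
  obtain ⟨x, ⟨hxΛ, hx⟩, hyx⟩ := Metric.mem_closure_iff.1 hy δ hδ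
  have hxy : dist x y ≤ δ := (dist_comm x y).trans_le hyx.le
  have return_near : retTimes f x (ε / 3) ⊆ retTimes f y ε := by
    simpa only [add_thirds] using retTimes_subset_retTimes_add (hclose x hxΛ y hyΛ hxy) (ε / 3)
  exact hF return_near (hx (ε / 3) (by positivity))

theorem recurrent_of_minimal_equicontinuous_general (hmin : MinimalOn f Λ)
    (heq : EquicontOnSet f Λ) (hF : IsUpperSet F) (hrec : (Λ ∩ FRecurrent f F).Nonempty) :
    Λ ⊆ FRecurrent f F := by
  have forward_invariant := mapsTo_inter_fRecurrent hF heq.continuousOn hmin.mapsTo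
  have dense : Λ ⊆ closure (Λ ∩ FRecurrent f F) :=
    hmin.subset_closure_of_mapsTo Set.inter_subset_left hrec forward_invariant
  exact (Set.subset_inter subset_rfl dense).trans (heq.inter_closure_subset_fRecurrent hF)

end Recurrent

/-- Lemma 1.2: for `f|_Λ` minimal and equicontinuous,
`Λ ∩ R(f,𝓕) ≠ ∅` implies `Λ ⊆ R(f,𝓕)`. -/
theorem recurrent_of_minimal_equicontinuous {X : Type*} [MetricSpace X] [CompactSpace X]
    (f : X → X) (hf : Continuous f) (Λ : Set X)
    (hclosed : IsClosed Λ) (hinv : Set.MapsTo f Λ Λ)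
    (hmin : MinimalOn f Λ) (heq : EquicontOnSet f Λ)
    (F : Set (Set ℕ))
    (hup : ∀ A B : Set ℕ, A ∈ F → A ⊆ B → B ∈ F)
    (hne : F.Nonempty) (hproper : F ≠ Set.univ)
    (hrec : (Λ ∩ FRecurrent f F).Nonempty) :
    Λ ⊆ FRecurrent f F :=
  recurrent_of_minimal_equicontinuous_general hmin heq (fun A B hAB hA => hup A B hA hAB) hrec
end

section
/- Let f : X → X and g : Y → Y be continuous self-maps of compact metric spaces X and Y, and let 𝓕 be a Furstenberg family. If f is Δ(𝓕)*-transitive, and g is transitive with Y = R(g,𝓕), then the product map f × g : X × Y → X × Y is transitive. -/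
/-!
Let `U₁ × V₁` and `U₂ × V₂` be nonempty open boxes. Transitivity of `g` gives `n` such that
`W = V₁ ∩ g⁻ⁿ(V₂)` is nonempty. If `y ∈ W` is `𝓕`-recurrent and `A = N(y, ε)` consists of times at
which the orbit of `y` is in `W`, then for `j ≤ k` in `A` the point `gʲ y ∈ W` is sent into `W` by
`gᵏ⁻ʲ`, so `Δ(A) ⊆ N(W, W)` and `N(W, W) ∈ Δ(𝓕)`. Hence `N(U₁, f⁻ⁿ(U₂))` meets `N(W, W)`, at `i`
say, and `n + i` belongs to both `N(U₁, U₂)` and `N(V₁, V₂)`.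

The set `f⁻ⁿ(U₂)` is nonempty because a transitive map has dense range: an open set missed by the
range could be reached only at time `0`.
-/

open Filter Topology

/-- The set `N(A, B)` of times at which the image of `A` under `f` meets `B`. It is the set that
appears, written out, in `IsTransitive` and `FTransitive`. -/
def hittingTimes {X : Type*} (f : X → X) (A B : Set X) : Set ℕ :=
  {i | ∃ x ∈ A, f^[i] x ∈ B}

section HittingTimes

variable {X Y : Type*}

theorem hittingTimes_mono (f : X → X) {A A' B B' : Set X} (hA : A ⊆ A') (hB : B ⊆ B') :
    hittingTimes f A B ⊆ hittingTimes f A' B' :=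
  fun _ ⟨x, hxA, hxB⟩ => ⟨x, hA hxA, hB hxB⟩

theorem mem_hittingTimes_preimage_iterate {f : X → X} {A B : Set X} {n i : ℕ} :
    i ∈ hittingTimes f A (f^[n] ⁻¹' B) ↔ n + i ∈ hittingTimes f A B := by
  simp only [hittingTimes, Set.mem_ofPred_eq, Set.mem_preimage, Function.iterate_add_apply]

theorem inter_hittingTimes_subset_prodMap (f : X → X) (g : Y → Y) (A A' : Set X) (B B' : Set Y) :
    hittingTimes f A A' ∩ hittingTimes g B B' ⊆
      hittingTimes (Prod.map f g) (A ×ˢ B) (A' ×ˢ B') := by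
  rintro i ⟨⟨x, hxA, hxA'⟩, y, hyB, hyB'⟩
  refine ⟨(x, y), ⟨hxA, hyB⟩, ?_⟩
  rw [Prod.map_iterate]
  exact ⟨hxA', hyB'⟩

theorem deltaSet_subset_hittingTimes {f : X → X} {x : X} {W : Set X} {A : Set ℕ}
    (hA : ∀ i ∈ A, f^[i] x ∈ W) : deltaSet A ⊆ hittingTimes f W W := by
  rintro _ ⟨j, hj, k, hk, hjk, rfl⟩
  refine ⟨f^[j] x, hA j hj, ?_⟩
  rw [← Function.iterate_add_apply, Nat.sub_add_cancel hjk]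
  exact hA k hk

end HittingTimes

theorem hittingTimes_mem_deltaFamily {Y : Type*} [MetricSpace Y] {g : Y → Y} {F : Set (Set ℕ)}
    {y : Y} (hy : y ∈ FRecurrent g F) {W : Set Y} (hW : W ∈ 𝓝 y) :
    hittingTimes g W W ∈ deltaFamily F := by
  obtain ⟨ε, hε, hball⟩ := Metric.nhds_basis_closedBall.mem_iff.mp hW
  have zero_mem : 0 ∈ retTimes g y ε := (dist_self y).trans_le hε.le
  have returns : ∀ i ∈ retTimes g y ε, g^[i] y ∈ W :=
    fun i hi => hball (Metric.mem_closedBall'.mpr hi)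
  exact ⟨retTimes g y ε, hy ε hε, zero_mem, deltaSet_subset_hittingTimes returns⟩

section Transitivity

variable {X Y : Type*} [TopologicalSpace X] [TopologicalSpace Y]

theorem denseRange_iterate_s5 {f : X → X} (hf : Continuous f) (hd : DenseRange f) (n : ℕ) :
    DenseRange f^[n] := by
  induction n with
  | zero => exact denseRange_id
  | succ n ih => exact ih.comp hd (hf.iterate n)

theorem IsTransitive.denseRange_s5 [R1Space X] {f : X → X} (h : IsTransitive f) : DenseRange f := by
  intro p
  by_contra hp
  have hfp : ¬Inseparable (f p) p := fun hins =>
    hp ((hins.mem_closed_iff isClosed_closure).mp (subset_closure ⟨p, rfl⟩))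
  obtain ⟨A, B, hA, hB, hfpA, hpB, hAB⟩ := r1_separation hfp
  obtain ⟨i, z, hzA, hzB, hz⟩ := h A (B ∩ (closure (Set.range f))ᶜ) hA
    (hB.inter isClosed_closure.isOpen_compl) ⟨f p, hfpA⟩ ⟨p, hpB, hp⟩
  cases i with
  | zero => exact Set.disjoint_left.mp hAB hzA hzB
  | succ i => exact hz (subset_closure ⟨f^[i] z, (Function.iterate_succ_apply' f i z).symm⟩)

theorem FTransitive.isTransitive_of_dual {f : X → X} {F : Set (Set ℕ)} (hF : F.Nonempty)
    (h : FTransitive f (dualFamily F)) : IsTransitive f := by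
  intro U V hU hV hUne hVne
  obtain ⟨A, hA⟩ := hF
  exact (h U V hU hV hUne hVne A hA).left

theorem isTransitive_of_boxes {h : X × Y → X × Y}
    (hbox : ∀ (U₁ U₂ : Set X) (V₁ V₂ : Set Y), IsOpen U₁ → IsOpen U₂ → IsOpen V₁ → IsOpen V₂ →
      U₁.Nonempty → U₂.Nonempty → V₁.Nonempty → V₂.Nonempty →
      (hittingTimes h (U₁ ×ˢ V₁) (U₂ ×ˢ V₂)).Nonempty) :
    IsTransitive h := by
  rintro U V hU hV ⟨⟨a, b⟩, hab⟩ ⟨⟨c, d⟩, hcd⟩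
  obtain ⟨U₁, V₁, hU₁, hV₁, ha, hb, hsubU⟩ := isOpen_prod_iff.mp hU a b hab
  obtain ⟨U₂, V₂, hU₂, hV₂, hc, hd, hsubV⟩ := isOpen_prod_iff.mp hV c d hcd
  exact (hbox U₁ U₂ V₁ V₂ hU₁ hU₂ hV₁ hV₂ ⟨a, ha⟩ ⟨c, hc⟩ ⟨b, hb⟩ ⟨d, hd⟩).mono
    (hittingTimes_mono h hsubU hsubV)

theorem FTransitive.isTransitive_prodMap [R1Space X] {f : X → X} {g : Y → Y} {F : Set (Set ℕ)}
    (hf : Continuous f) (hg : Continuous g) (hftrans : FTransitive f (dualFamily F))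
    (hgtrans : IsTransitive g)
    (hgF : ∀ W : Set Y, IsOpen W → W.Nonempty → hittingTimes g W W ∈ F) :
    IsTransitive (Prod.map f g) := by
  refine isTransitive_of_boxes fun U₁ U₂ V₁ V₂ hU₁ hU₂ hV₁ hV₂ hU₁ne hU₂ne hV₁ne hV₂ne => ?_
  obtain ⟨n, y, hyV₁, hyV₂⟩ := hgtrans V₁ V₂ hV₁ hV₂ hV₁ne hV₂ne
  have hW : hittingTimes g (V₁ ∩ g^[n] ⁻¹' V₂) (V₁ ∩ g^[n] ⁻¹' V₂) ∈ F :=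
    hgF _ (hV₁.inter (hV₂.preimage (hg.iterate n))) ⟨y, hyV₁, hyV₂⟩
  have hdense : DenseRange f^[n] :=
    denseRange_iterate_s5 hf (hftrans.isTransitive_of_dual ⟨_, hW⟩).denseRange_s5 n
  obtain ⟨i, hif, hig⟩ := hftrans U₁ (f^[n] ⁻¹' U₂) hU₁ (hU₂.preimage (hf.iterate n)) hU₁ne
    (hdense.exists_mem_open hU₂ hU₂ne) _ hW
  have hnf : n + i ∈ hittingTimes f U₁ U₂ := mem_hittingTimes_preimage_iterate.mp hif
  have hng : n + i ∈ hittingTimes g V₁ V₂ := mem_hittingTimes_preimage_iterate.mp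
    (hittingTimes_mono g Set.inter_subset_left Set.inter_subset_right hig)
  exact ⟨n + i, inter_hittingTimes_subset_prodMap f g U₁ U₂ V₁ V₂ ⟨hnf, hng⟩⟩

end Transitivity

theorem prod_transitive_of_deltaDual_transitive_general
    {X : Type*} [TopologicalSpace X] [R1Space X] {Y : Type*} [MetricSpace Y]
    {f : X → X} {g : Y → Y} (hf : Continuous f) (hg : Continuous g) {F : Set (Set ℕ)}
    (hftrans : FTransitive f (dualFamily (deltaFamily F))) (hgtrans : IsTransitive g)
    (hgrec : Dense (FRecurrent g F)) :
    IsTransitive (Prod.map f g) := by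
  refine hftrans.isTransitive_prodMap hf hg hgtrans fun W hW hWne => ?_
  obtain ⟨y, hy, hyW⟩ := hgrec.exists_mem_open hW hWne
  exact hittingTimes_mem_deltaFamily hy (hW.mem_nhds hyW)

/-- Lemma 1.3: if `f` is `Δ(𝓕)*`-transitive and `g` is transitive with
`Y = R(g,𝓕)`, then `f × g` is transitive. -/
theorem prod_transitive_of_deltaDual_transitive
    {X : Type*} [MetricSpace X] [CompactSpace X]
    {Y : Type*} [MetricSpace Y] [CompactSpace Y]
    (f : X → X) (g : Y → Y) (hf : Continuous f) (hg : Continuous g)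
    (F : Set (Set ℕ))
    (hup : ∀ A B : Set ℕ, A ∈ F → A ⊆ B → B ∈ F)
    (hne : F.Nonempty) (hproper : F ≠ Set.univ)
    (hftrans : FTransitive f (dualFamily (deltaFamily F)))
    (hgtrans : IsTransitive g)
    (hgrec : ∀ y : Y, y ∈ FRecurrent g F) :
    IsTransitive (Prod.map f g) := by
  exact prod_transitive_of_deltaDual_transitive_general hf hg hftrans hgtrans
    fun y => subset_closure (hgrec y)
end

section
/- Let X be a compact metric space, f : X → X a continuous map, and Λ ⊆ X a closed f-invariant subset such that f|_Λ : Λ → Λ is minimal and equicontinuous. Then for every ε > 0, if ⋃_{x∈Λ} V_ε^s(x) is dense in X, then X = ⋃_{x∈Λ} closure(V_{2ε}^s(x)). -/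
open Filter Topology

/-!
If two points of `Λ` are close, equicontinuity keeps their orbits `η`-close, so by the triangle
inequality for `limsup` the set `V_ε^s` of the one is contained in `V_{ε+η}^s` of the other. As `Λ`
is compact, finitely many of the sets `V_{ε+η}^s(x)`, `x ∈ Λ`, therefore cover `⋃_{x∈Λ} V_ε^s(x)`,
and closure commutes with finite unions.
-/

lemma isBoundedUnder_le_dist {ι Y : Type*} [PseudoMetricSpace Y] [BoundedSpace Y] (l : Filter ι)
    (u v : ι → Y) : IsBoundedUnder (· ≤ ·) l fun i => dist (u i) (v i) :=
  let ⟨C, hC⟩ := Metric.boundedSpace_iff.1 ‹BoundedSpace Y›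
  isBoundedUnder_of ⟨C, fun i => hC (u i) (v i)⟩

lemma isBoundedUnder_ge_dist {ι Y : Type*} [PseudoMetricSpace Y] (l : Filter ι) (u v : ι → Y) :
    IsBoundedUnder (· ≥ ·) l fun i => dist (u i) (v i) :=
  isBoundedUnder_of ⟨0, fun _ => dist_nonneg⟩

lemma limsup_dist_triangle {ι Y : Type*} [PseudoMetricSpace Y] [BoundedSpace Y] (l : Filter ι)
    [l.NeBot] (u v w : ι → Y) :
    limsup (fun i => dist (u i) (w i)) l ≤
      limsup (fun i => dist (u i) (v i)) l + limsup (fun i => dist (v i) (w i)) l :=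
  have huv := isBoundedUnder_le_dist l u v
  have hvw := isBoundedUnder_le_dist l v w
  calc
    limsup (fun i => dist (u i) (w i)) l
      ≤ limsup ((fun i => dist (u i) (v i)) + fun i => dist (v i) (w i)) l :=
        limsup_le_limsup (.of_forall fun i => dist_triangle (u i) (v i) (w i))
          (isBoundedUnder_ge_dist l u w).isCoboundedUnder_le (isBoundedUnder_le_add huv hvw)
    _ ≤ limsup (fun i => dist (u i) (v i)) l + limsup (fun i => dist (v i) (w i)) l :=
        limsup_add_le (isBoundedUnder_ge_dist l u v) huv
          (isBoundedUnder_ge_dist l v w).isCoboundedUnder_le hvw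

lemma closure_biUnion_subset_of_isCompact {Y Z : Type*} [TopologicalSpace Y] [TopologicalSpace Z]
    {K : Set Y} (hK : IsCompact K) {A B : Y → Set Z}
    (hAB : ∀ x ∈ K, ∀ᶠ y in 𝓝[K] x, A y ⊆ B x) :
    closure (⋃ x ∈ K, A x) ⊆ ⋃ x ∈ K, closure (B x) := by
  obtain ⟨t, htK, hKt⟩ := hK.elim_nhdsWithin_subcover (fun x => {y | A y ⊆ B x}) hAB
  have hcover : ⋃ y ∈ K, A y ⊆ ⋃ x ∈ t, B x := Set.iUnion₂_subset fun y hy =>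
    let ⟨_, hxt, hyx⟩ := Set.mem_iUnion₂.1 (hKt hy)
    Set.Subset.trans hyx (Set.subset_biUnion_of_mem (u := B) hxt)
  calc
    closure (⋃ x ∈ K, A x) ⊆ closure (⋃ x ∈ t, B x) := closure_mono hcover
    _ = ⋃ x ∈ t, closure (B x) := t.closure_biUnion B
    _ ⊆ ⋃ x ∈ K, closure (B x) := Set.biUnion_subset_biUnion_left htK

section StableSets

variable {X : Type*} [MetricSpace X] {f : X → X}

-- Where `dist (f^[i] x) (f^[i] y)` is unbounded in `i`, the real-valued `limsup` in `Vs` takes the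
-- junk value `0`.
lemma Vs_subset_Vs_add [BoundedSpace X] {x y : X} {ε η : ℝ} (hy : y ∈ Vs f x η) :
    Vs f y ε ⊆ Vs f x (η + ε) := fun z hz =>
  (limsup_dist_triangle atTop (fun i => f^[i] x) (fun i => f^[i] y) fun i => f^[i] z).trans
    (add_le_add hy hz)

lemma mem_Vs_of_forall_dist_le {x y : X} {η : ℝ} (h : ∀ i, dist (f^[i] x) (f^[i] y) ≤ η) :
    y ∈ Vs f x η :=
  limsup_le_of_le (isBoundedUnder_ge_dist _ _ _).isCoboundedUnder_le (.of_forall h)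

lemma EquicontOnSet.eventually_mem_Vs {Λ : Set X} (hΛ : EquicontOnSet f Λ) {x : X} (hx : x ∈ Λ)
    {η : ℝ} (hη : 0 < η) : ∀ᶠ y in 𝓝[Λ] x, y ∈ Vs f x η := by
  obtain ⟨δ, hδ, hclose⟩ := hΛ η hη
  filter_upwards [self_mem_nhdsWithin,
    mem_nhdsWithin_of_mem_nhds (Metric.closedBall_mem_nhds x hδ)] with y hy hyx
  exact mem_Vs_of_forall_dist_le (hclose x hx y hy (Metric.mem_closedBall'.1 hyx))

theorem union_closure_eq_univ_general [BoundedSpace X] {Λ : Set X} (hΛ : IsCompact Λ)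
    (heq : EquicontOnSet f Λ) {ε η : ℝ} (hη : 0 < η) (hdense : Dense (⋃ x ∈ Λ, Vs f x ε)) :
    (⋃ x ∈ Λ, closure (Vs f x (η + ε))) = Set.univ :=
  Set.univ_subset_iff.1 <| hdense.closure_eq ▸ closure_biUnion_subset_of_isCompact hΛ fun _ hx =>
    (heq.eventually_mem_Vs hx hη).mono fun _ hy => Vs_subset_Vs_add hy

end StableSets

/-- Lemma 2.1: with `f|_Λ` minimal and equicontinuous, if `⋃_{x∈Λ} V_ε^s(x)`
is dense, then `X = ⋃_{x∈Λ} closure (V_{2ε}^s(x))`. -/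
theorem union_closure_eq_univ {X : Type*} [MetricSpace X] [CompactSpace X]
    (f : X → X) (hf : Continuous f) (Λ : Set X)
    (hclosed : IsClosed Λ) (hinv : Set.MapsTo f Λ Λ)
    (hmin : MinimalOn f Λ) (heq : EquicontOnSet f Λ) :
    ∀ ε : ℝ, 0 < ε → Dense (⋃ x ∈ Λ, Vs f x ε) →
      (⋃ x ∈ Λ, closure (Vs f x (2 * ε))) = Set.univ := fun ε hε hdense =>
  two_mul ε ▸ union_closure_eq_univ_general hclosed.isCompact heq hε hdense
end

section
/- Let X be a compact metric space, f : X → X a continuous map, and Λ ⊆ X a closed f-invariant subset such that f|_Λ : Λ → Λ is minimal and equicontinuous. If ⋃_{x∈Λ} V_ε^s(x) is dense in X for every ε > 0, and the product map f|_Λ × f : Λ × X → Λ × X is transitive, then V_ε^s(x) is dense in X for every x ∈ Λ and every ε > 0. -/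
/-!
Fix `x ∈ Λ` and a non-empty open set `U`. If `y` shadows `z ∈ Λ` and, at some time `i`, both
`f^i y ∈ U` and `f^i z` is close to `x`, then by equicontinuity `f^i y` is a point of `U` that
shadows `x`. The difficulty is that `z` is only known once `y` has been chosen, while `i` depends
on `z` and must send `y` into `U`. Total boundedness leaves finitely many cases for `z`: cover `Λ`
by small open sets `A₁, …, Aₙ`. Transitivity of `f|_Λ × f`, applied successively, produces times
`i₁, …, iₙ` such that `f^{iₖ}` carries a point of `Aₖ` close to `x` while the open set
`W = U ∩ ⋂ₖ f^{-iₖ}(U)` is non-empty. By equicontinuity `f^{iₖ}` carries all of `Aₖ` close to `x`,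
so any `y ∈ W` that shadows some `z ∈ Λ` will do, whichever `Aₖ` contains `z`.
-/

open Filter Topology

section Transitive

variable {Y Z : Type*} {g : Y → Y} {f : Z → Z}

lemma IsTransitive.exists_inter_preimage_iterate_nonempty [TopologicalSpace Y]
    [TopologicalSpace Z] (htrans : IsTransitive (Prod.map g f)) {A B : Set Y} {U V : Set Z}
    (hA : IsOpen A) (hB : IsOpen B) (hU : IsOpen U) (hV : IsOpen V) (hAne : A.Nonempty)
    (hBne : B.Nonempty) (hUne : U.Nonempty) (hVne : V.Nonempty) :
    ∃ i : ℕ, (A ∩ g^[i] ⁻¹' B).Nonempty ∧ (U ∩ f^[i] ⁻¹' V).Nonempty := by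
  obtain ⟨i, ⟨p, u⟩, ⟨hpA, huU⟩, hi⟩ :=
    htrans (A ×ˢ U) (B ×ˢ V) (hA.prod hU) (hB.prod hV) (hAne.prod hUne) (hBne.prod hVne)
  rw [Prod.map_iterate] at hi
  exact ⟨i, ⟨p, hpA, hi.1⟩, ⟨u, huU, hi.2⟩⟩

lemma IsTransitive.exists_isOpen_forall_mem_exists_subset_preimage_iterate [TopologicalSpace Y]
    [TopologicalSpace Z] (htrans : IsTransitive (Prod.map g f)) (hf : Continuous f) {ι : Type*}
    {t : Set ι} (ht : t.Finite) {A : ι → Set Y} (hA : ∀ a ∈ t, IsOpen (A a))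
    (hAne : ∀ a ∈ t, (A a).Nonempty) {B : Set Y} (hB : IsOpen B) (hBne : B.Nonempty)
    {U : Set Z} (hU : IsOpen U) (hUne : U.Nonempty) :
    ∃ W : Set Z, IsOpen W ∧ W.Nonempty ∧
      ∀ a ∈ t, ∃ i : ℕ, W ⊆ f^[i] ⁻¹' U ∧ (A a ∩ g^[i] ⁻¹' B).Nonempty := by
  induction t, ht using Set.Finite.induction_on with
  | empty => exact ⟨U, hU, hUne, by simp⟩
  | @insert a t _ _ ih =>
    rw [Set.forall_mem_insert] at hA hAne
    obtain ⟨W, hW, hWne, hWt⟩ := ih hA.2 hAne.2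
    obtain ⟨i, hi, hiW⟩ := htrans.exists_inter_preimage_iterate_nonempty
      hA.1 hB hW hU hAne.1 hBne hWne hUne
    refine ⟨W ∩ f^[i] ⁻¹' U, hW.inter (hU.preimage (hf.iterate i)), hiW, ?_⟩
    refine Set.forall_mem_insert.2 ⟨⟨i, Set.inter_subset_right, hi⟩, fun b hb ↦ ?_⟩
    obtain ⟨j, hWj, hj⟩ := hWt b hb
    exact ⟨j, Set.inter_subset_left.trans hWj, hj⟩

lemma IsTransitive.exists_isOpen_forall_exists_subset_preimage_iterate [UniformSpace Y]
    [TopologicalSpace Z] (htrans : IsTransitive (Prod.map g f)) (hf : Continuous f)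
    (hY : TotallyBounded (Set.univ : Set Y)) (hg : UniformEquicontinuous fun i : ℕ ↦ g^[i])
    {b : Y} {N : Set Y} (hN : N ∈ 𝓝 b) {U : Set Z} (hU : IsOpen U) (hUne : U.Nonempty) :
    ∃ W : Set Z, IsOpen W ∧ W.Nonempty ∧
      ∀ z : Y, ∃ i : ℕ, W ⊆ f^[i] ⁻¹' U ∧ g^[i] z ∈ N := by
  obtain ⟨M, hM, hMN⟩ := UniformSpace.mem_nhds_iff.1 hN
  obtain ⟨V, hV, hVo, -, hVM⟩ := comp_open_symm_mem_uniformity_sets hM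
  obtain ⟨D, hD, hDo, _, hDV⟩ := comp_open_symm_mem_uniformity_sets (hg V hV)
  obtain ⟨t, ht, hcover⟩ := hY D hD
  obtain ⟨W, hW, hWne, hWt⟩ :=
    htrans.exists_isOpen_forall_mem_exists_subset_preimage_iterate hf ht
      (fun a _ ↦ UniformSpace.isOpen_ball a hDo) (fun a _ ↦ ⟨a, UniformSpace.mem_ball_self a hD⟩)
      (UniformSpace.isOpen_ball b hVo) ⟨b, UniformSpace.mem_ball_self b hV⟩ hU hUne
  refine ⟨W, hW, hWne, fun z ↦ ?_⟩
  obtain ⟨a, hat, hza⟩ := Set.mem_iUnion₂.1 (hcover (Set.mem_univ z))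
  obtain ⟨i, hWi, p, hap, hbp⟩ := hWt a hat
  have hpz : (g^[i] p, g^[i] z) ∈ V :=
    hDV (SetRel.prodMk_mem_comp (SetRel.symm D hap) (SetRel.symm D hza)) i
  exact ⟨i, hWi, hMN (hVM (SetRel.prodMk_mem_comp hbp hpz))⟩

end Transitive

section StableSet

variable {X : Type*} [MetricSpace X] {f : X → X}

lemma EquicontOnSet.uniformEquicontinuous_restrict {Λ : Set X} (heq : EquicontOnSet f Λ)
    (hinv : Set.MapsTo f Λ Λ) :
    UniformEquicontinuous fun i : ℕ ↦ (hinv.restrict f Λ Λ)^[i] := by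
  refine Metric.uniformEquicontinuous_iff.2 fun ε hε ↦ ?_
  obtain ⟨δ, hδ, hδε⟩ := heq (ε / 2) (half_pos hε)
  refine ⟨δ, hδ, fun p q hpq i ↦ ?_⟩
  rw [hinv.iterate_restrict]
  exact (hδε p p.2 q q.2 hpq.le i).trans_lt (half_lt_self hε)

lemma iterate_mem_Vs_iterate_iff {x y : X} {ε : ℝ} (k : ℕ) :
    f^[k] y ∈ Vs f (f^[k] x) ε ↔ y ∈ Vs f x ε := by
  simp only [Vs, Set.mem_ofPred_eq, ← Function.iterate_add_apply]
  rw [limsup_nat_add (fun i ↦ dist (f^[i] x) (f^[i] y)) k]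

lemma mem_Vs_add_of_eventually_dist_le [BoundedSpace X] {x y z : X} {ρ η : ℝ}
    (hxz : ∀ᶠ i in atTop, dist (f^[i] x) (f^[i] z) ≤ ρ) (hy : y ∈ Vs f z η) :
    y ∈ Vs f x (ρ + η) := by
  have bddAbove (u v : X) : IsBoundedUnder (· ≤ ·) atTop fun i ↦ dist (f^[i] u) (f^[i] v) :=
    isBoundedUnder_of ⟨Metric.diam (Set.univ : Set X), fun _ ↦
      Metric.dist_le_diam_of_mem (Bornology.IsBounded.all _) (Set.mem_univ _) (Set.mem_univ _)⟩
  have cobdd (u v : X) : IsCoboundedUnder (· ≤ ·) atTop fun i ↦ dist (f^[i] u) (f^[i] v) :=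
    (isBoundedUnder_of ⟨0, fun _ ↦ dist_nonneg⟩ : IsBoundedUnder (· ≥ ·) _ _).isCoboundedUnder_le
  have hle : ∀ᶠ i in atTop, dist (f^[i] x) (f^[i] y) ≤ ρ + dist (f^[i] z) (f^[i] y) :=
    hxz.mono fun i hi ↦ (dist_triangle _ (f^[i] z) _).trans (by gcongr)
  calc limsup (fun i ↦ dist (f^[i] x) (f^[i] y)) atTop
      ≤ limsup (fun i ↦ ρ + dist (f^[i] z) (f^[i] y)) atTop :=
        limsup_le_limsup hle (cobdd x y) (isBoundedUnder_le_add isBoundedUnder_const (bddAbove z y))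
    _ = ρ + limsup (fun i ↦ dist (f^[i] z) (f^[i] y)) atTop :=
        limsup_const_add _ _ _ (bddAbove z y) (cobdd z y)
    _ ≤ ρ + η := by gcongr; exact hy

theorem dense_stable_sets_general [BoundedSpace X] (hf : Continuous f) {Λ : Set X}
    (hΛ : TotallyBounded Λ) (hinv : Set.MapsTo f Λ Λ) (heq : EquicontOnSet f Λ)
    (htrans : IsTransitive (Prod.map (Set.MapsTo.restrict f Λ Λ hinv) f)) {η ε : ℝ} (hηε : η < ε)
    (hunion : Dense (⋃ z ∈ Λ, Vs f z η)) {x : X} (hx : x ∈ Λ) : Dense (Vs f x ε) := by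
  refine dense_iff_inter_open.2 fun U hU hUne ↦ ?_
  obtain ⟨δ, hδ, hδε⟩ := heq (ε - η) (sub_pos.2 hηε)
  have huniv : TotallyBounded (Set.univ : Set Λ) := by
    simpa using totallyBounded_preimage (isUniformInducing_val Λ) hΛ
  obtain ⟨W, hW, hWne, hWΛ⟩ := htrans.exists_isOpen_forall_exists_subset_preimage_iterate hf
    huniv (heq.uniformEquicontinuous_restrict hinv)
    (Metric.closedBall_mem_nhds (⟨x, hx⟩ : Λ) hδ) hU hUne
  obtain ⟨y, hyW, hy⟩ := hunion.inter_open_nonempty W hW hWne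
  obtain ⟨z, hz, hyz⟩ := Set.mem_iUnion₂.1 hy
  obtain ⟨i, hWi, hzx⟩ := hWΛ ⟨z, hz⟩
  rw [hinv.iterate_restrict] at hzx
  have hshadow : ∀ j, dist (f^[j] x) (f^[j] (f^[i] z)) ≤ ε - η :=
    hδε x hx _ (hinv.iterate i hz) (Metric.mem_closedBall'.1 hzx)
  refine ⟨f^[i] y, hWi hyW, ?_⟩
  simpa only [sub_add_cancel] using mem_Vs_add_of_eventually_dist_le (.of_forall hshadow)
    ((iterate_mem_Vs_iterate_iff i).2 hyz)

end StableSet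

/-- Lemma 2.5: with `f|_Λ` minimal and equicontinuous, if `⋃_{x∈Λ} V_ε^s(x)`
is dense for all `ε > 0` and `f|_Λ × f` is transitive, then every `V_ε^s(x)`, `x ∈ Λ`,
`ε > 0`, is dense. -/
theorem dense_stable_sets {X : Type*} [MetricSpace X] [CompactSpace X]
    (f : X → X) (hf : Continuous f) (Λ : Set X)
    (hclosed : IsClosed Λ) (hinv : Set.MapsTo f Λ Λ)
    (hmin : MinimalOn f Λ) (heq : EquicontOnSet f Λ)
    (hunion : ∀ ε : ℝ, 0 < ε → Dense (⋃ x ∈ Λ, Vs f x ε))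
    (htrans : IsTransitive (Prod.map (Set.MapsTo.restrict f Λ Λ hinv) f)) :
    ∀ x ∈ Λ, ∀ ε : ℝ, 0 < ε → Dense (Vs f x ε) :=
  fun _ hx ε hε ↦
    dense_stable_sets_general hf (isCompact_univ.totallyBounded.subset Λ.subset_univ) hinv heq
      htrans (half_lt_self hε) (hunion (ε / 2) (half_pos hε)) hx
end

section
/- Let X be a compact metric space, f : X → X a continuous map, and x ∈ X. The forward orbit {f^i(x) : i ≥ 0} is a distal set for f if and only if one of the following holds: (i) the forward orbit is finite and x is a periodic point of f; or (ii) the forward orbit is infinite and ω(x,f) ∩ Per(f) = ∅. -/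
/-!
Write `O` for the forward orbit of `x`. Distality of a set is a condition on pairs, and a pair of
orbit points has the form `y`, `f^[p] y` up to order. Since `f^[p]` commutes with the iterates of
`f`, the distances to be bounded below are the values on the orbit of `y` of the continuous function
`z ↦ dist z (f^[p] z)`. Compactness of the orbit closure bounds this function below by a positive
constant exactly when `f^[p]` has no fixed point in the orbit closure of `y`.

If `x` is not periodic, the pairs `x`, `f^[p] x` with `p > 0` already force `closure O` to contain
no periodic point, and this is also sufficient. If `x` is periodic, `O` is finite, hence closed, and
a fixed point of `f^[p]` on the orbit of `y` would make `y` itself fixed. So `O` is distal iff `x`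
is periodic or `closure O` is free of periodic points. The two alternatives become (i) and (ii)
because `closure O = O ∪ ω(x, f)` and because `O` contains a periodic point iff it is finite.
-/

open Filter Topology

/-- The set of periodic points of `f`. -/
def Per {X : Type*} (f : X → X) : Set X :=
  {y | ∃ i : ℕ, 0 < i ∧ f^[i] y = y}

/-- The ω-limit set of `x` under `f`: limits of subsequences of the forward orbit. -/
def omegaLimitSet {X : Type*} [TopologicalSpace X] (f : X → X) (x : X) : Set X :=
  {y | ∃ φ : ℕ → ℕ, StrictMono φ ∧
    Filter.Tendsto (fun j => f^[φ j] x) Filter.atTop (nhds y)}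

/-- The forward orbit of `x` under `f`. Reducible, so that it is interchangeable with the range it
abbreviates. -/
abbrev forwardOrbit {X : Type*} (f : X → X) (x : X) : Set X :=
  Set.range fun i : ℕ => f^[i] x

/-- `(u, v)` is a distal pair for `f`: the orbits of `u` and `v` stay uniformly apart at equal
times. The positive infimum is encoded by a positive lower bound `c`. -/
def DistalPair {X : Type*} [PseudoMetricSpace X] (f : X → X) (u v : X) : Prop :=
  ∃ c > 0, ∀ i : ℕ, c ≤ dist (f^[i] u) (f^[i] v)

section ForwardOrbit

variable {X : Type*} {f : X → X} {x y : X}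

lemma mem_forwardOrbit_self (f : X → X) (x : X) : x ∈ forwardOrbit f x :=
  ⟨0, rfl⟩

lemma forwardOrbit_subset (hy : y ∈ forwardOrbit f x) : forwardOrbit f y ⊆ forwardOrbit f x := by
  obtain ⟨a, rfl⟩ := hy
  rintro _ ⟨i, rfl⟩
  exact ⟨i + a, Function.iterate_add_apply f i a x⟩

lemma pairwise_forwardOrbit_iff {r : X → X → Prop} (hr : ∀ ⦃u v⦄, r u v → r v u) :
    (forwardOrbit f x).Pairwise r ↔ ∀ y ∈ forwardOrbit f x, ∀ p, y ≠ f^[p] y → r y (f^[p] y) := by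
  refine ⟨fun h y hy p hne => h hy (forwardOrbit_subset hy ⟨p, rfl⟩) hne, fun h => ?_⟩
  have of_le {a b : ℕ} (hab : a ≤ b) (hne : f^[a] x ≠ f^[b] x) : r (f^[a] x) (f^[b] x) := by
    obtain ⟨p, rfl⟩ := Nat.exists_eq_add_of_le' hab
    rw [Function.iterate_add_apply] at hne ⊢
    exact h _ ⟨a, rfl⟩ p hne
  rintro _ ⟨a, rfl⟩ _ ⟨b, rfl⟩ hne
  rcases le_total a b with hab | hba
  · exact of_le hab hne
  · exact hr (of_le hba hne.symm)

lemma finite_forwardOrbit_of_mem_Per (hx : x ∈ Per f) : (forwardOrbit f x).Finite := by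
  obtain ⟨p, hp, hpx⟩ := hx
  refine ((Set.finite_lt_nat p).image fun i => f^[i] x).subset ?_
  rintro _ ⟨i, rfl⟩
  exact ⟨i % p, Nat.mod_lt i hp, Function.IsPeriodicPt.iterate_mod_apply hpx i⟩

lemma finite_forwardOrbit_of_mem (hy : y ∈ forwardOrbit f x) (hfin : (forwardOrbit f y).Finite) :
    (forwardOrbit f x).Finite := by
  obtain ⟨a, rfl⟩ := hy
  refine (((Set.finite_lt_nat a).image fun i => f^[i] x).union hfin).subset ?_
  rintro _ ⟨i, rfl⟩
  rcases lt_or_ge i a with hia | hai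
  · exact .inl ⟨i, hia, rfl⟩
  · refine .inr ⟨i - a, ?_⟩
    simp only [← Function.iterate_add_apply, Nat.sub_add_cancel hai]

lemma exists_mem_Per_of_finite_forwardOrbit (hfin : (forwardOrbit f x).Finite) :
    ∃ y ∈ forwardOrbit f x, y ∈ Per f := by
  obtain ⟨a, b, hab, heq⟩ := hfin.exists_lt_map_eq_of_forall_mem (f := fun i : ℕ => f^[i] x)
    Set.mem_range_self
  refine ⟨f^[a] x, ⟨a, rfl⟩, b - a, Nat.sub_pos_of_lt hab, ?_⟩
  rw [← Function.iterate_add_apply, Nat.sub_add_cancel hab.le]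
  exact heq.symm

lemma infinite_forwardOrbit_iff_disjoint_Per :
    (forwardOrbit f x).Infinite ↔ Disjoint (forwardOrbit f x) (Per f) := by
  rw [Set.disjoint_left]
  refine ⟨fun hinf y hy hyper => hinf ?_, fun hdisj hfin => ?_⟩
  · exact finite_forwardOrbit_of_mem hy (finite_forwardOrbit_of_mem_Per hyper)
  · obtain ⟨y, hy, hyper⟩ := exists_mem_Per_of_finite_forwardOrbit hfin
    exact hdisj hy hyper

lemma iterate_mem_Per (hx : x ∈ Per f) (i : ℕ) : f^[i] x ∈ Per f := by
  obtain ⟨p, hp, hpx⟩ := hx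
  exact ⟨p, hp, Function.IsPeriodicPt.apply_iterate hpx i⟩

lemma injOn_iterate_Per (f : X → X) (i : ℕ) : Set.InjOn f^[i] (Per f) :=
  ((Function.bijOn_periodicPts f).iterate i).injOn

lemma iterate_eq_self_of_mem_forwardOrbit (hx : x ∈ Per f) (hy : y ∈ forwardOrbit f x) {p : ℕ}
    (hpy : f^[p] y = y) : f^[p] x = x := by
  obtain ⟨i, rfl⟩ := hy
  refine injOn_iterate_Per f i (iterate_mem_Per hx p) hx ?_
  rwa [Function.Commute.iterate_iterate_self f i p x]

end ForwardOrbit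

section OmegaLimitSet

variable {X : Type*} [TopologicalSpace X]

lemma closure_range_eq_union_mapClusterPt_cofinite [T1Space X] {ι : Type*} (u : ι → X) :
    closure (Set.range u) = Set.range u ∪ {y | MapClusterPt y cofinite u} := by
  refine Set.Subset.antisymm (fun y hy => ?_) (Set.union_subset subset_closure fun y hy => ?_)
  · refine or_iff_not_imp_left.2 fun hyu => mapClusterPt_iff_frequently.2 fun s hs => ?_
    rw [frequently_cofinite_iff_infinite]
    intro hfin
    -- Only finitely many terms lie in `s`, so deleting them leaves a neighbourhood of `y`.
    have hy_notMem : y ∉ u '' {i | u i ∈ s} := fun h => hyu (Set.image_subset_range _ _ h)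
    have hmem : s \ u '' {i | u i ∈ s} ∈ 𝓝 y :=
      inter_mem hs ((hfin.image u).isClosed.compl_mem_nhds hy_notMem)
    obtain ⟨_, ⟨hi, hni⟩, i, rfl⟩ := mem_closure_iff_nhds.1 hy _ hmem
    exact hni ⟨i, hi, rfl⟩
  · refine mem_closure_iff_nhds.2 fun s hs => ?_
    obtain ⟨i, hi⟩ := (mapClusterPt_iff_frequently.1 hy s hs).exists
    exact ⟨u i, hi, i, rfl⟩

lemma mem_omegaLimitSet_iff_mapClusterPt [FirstCountableTopology X] {f : X → X} {x y : X} :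
    y ∈ omegaLimitSet f x ↔ MapClusterPt y atTop fun i : ℕ => f^[i] x := by
  refine ⟨?_, MapClusterPt.tendsto_subseq⟩
  rintro ⟨φ, hφ, hy⟩
  exact hy.mapClusterPt.of_comp hφ.tendsto_atTop

lemma closure_forwardOrbit [T1Space X] [FirstCountableTopology X] (f : X → X) (x : X) :
    closure (forwardOrbit f x) = forwardOrbit f x ∪ omegaLimitSet f x := by
  rw [closure_range_eq_union_mapClusterPt_cofinite, Nat.cofinite_eq_atTop]
  congr 1
  ext y
  exact mem_omegaLimitSet_iff_mapClusterPt.symm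

lemma disjoint_closure_forwardOrbit_Per_iff [T1Space X] [FirstCountableTopology X] {f : X → X}
    {x : X} :
    Disjoint (closure (forwardOrbit f x)) (Per f) ↔
      (forwardOrbit f x).Infinite ∧ omegaLimitSet f x ∩ Per f = ∅ := by
  rw [closure_forwardOrbit, Set.disjoint_union_left, infinite_forwardOrbit_iff_disjoint_Per,
    ← Set.disjoint_iff_inter_eq_empty]

end OmegaLimitSet

namespace DistalPair

variable {X : Type*} [PseudoMetricSpace X] {f g : X → X} {x y : X}

lemma symm (h : DistalPair f x y) : DistalPair f y x := by
  simpa only [DistalPair, dist_comm] using h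

lemma apply_ne_of_mem_closure (h : DistalPair f x (g x)) (hfg : Function.Commute f g)
    (hg : Continuous g) (hy : y ∈ closure (forwardOrbit f x)) : g y ≠ y := by
  obtain ⟨c, hc, hle⟩ := h
  have hclosed : IsClosed {z | c ≤ dist z (g z)} :=
    isClosed_le continuous_const (continuous_id.dist hg)
  have hle_closure : c ≤ dist y (g y) := by
    refine closure_minimal ?_ hclosed hy
    rintro _ ⟨i, rfl⟩
    change c ≤ dist (f^[i] x) (g (f^[i] x))
    simpa only [(hfg.iterate_left i).eq x] using hle i
  intro hgy
  rw [hgy, dist_self] at hle_closure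
  exact hc.not_ge hle_closure

end DistalPair

section Distal

variable {X : Type*} [MetricSpace X] {f g : X → X} {x : X}

lemma distalPair_apply_of_forall_mem_closure_ne (hfg : Function.Commute f g) (hg : Continuous g)
    (hK : IsCompact (closure (forwardOrbit f x)))
    (hne : ∀ y ∈ closure (forwardOrbit f x), g y ≠ y) : DistalPair f x (g x) := by
  obtain ⟨y, hy, hmin⟩ := hK.exists_isMinOn ⟨x, subset_closure (mem_forwardOrbit_self f x)⟩
    (continuous_id.dist hg).continuousOn
  refine ⟨dist y (g y), dist_pos.2 (hne y hy).symm, fun i => ?_⟩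
  rw [(hfg.iterate_left i).eq x]
  exact hmin (subset_closure ⟨i, rfl⟩)

lemma distalSet_iff_pairwise_distalPair {S : Set X} :
    DistalSet f S ↔ S.Pairwise (DistalPair f) := by
  constructor
  · intro h u hu v hv huv
    obtain ⟨c, hc, hle⟩ := h 2 le_rfl ![u, v] (by simp [Fin.forall_fin_two, hu, hv])
      (by simp [Function.Injective, Fin.forall_fin_two, huv, huv.symm])
    exact ⟨c, hc, fun i => hle i 0 1 Fin.zero_lt_one⟩
  · intro h n _ u hu hinj
    have hpair (q : {q : Fin n × Fin n // q.1 < q.2}) : DistalPair f (u q.1.1) (u q.1.2) :=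
      h (hu _) (hu _) (hinj.ne q.2.ne)
    choose c hc hle using hpair
    obtain ⟨δ, hδ, hδc⟩ := Pi.exists_forall_pos_add_lt (x := 0) (y := c) hc
    exact ⟨δ, hδ, fun i j k hjk => by
      simpa using (hδc ⟨(j, k), hjk⟩).le.trans (hle ⟨(j, k), hjk⟩ i)⟩

lemma distalSet_forwardOrbit_iff_forall_iterate : DistalSet f (forwardOrbit f x) ↔
    ∀ y ∈ forwardOrbit f x, ∀ p, y ≠ f^[p] y → DistalPair f y (f^[p] y) := by
  rw [distalSet_iff_pairwise_distalPair, pairwise_forwardOrbit_iff fun _ _ => DistalPair.symm]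

lemma distalSet_forwardOrbit_of_mem_Per (hf : Continuous f) (hx : x ∈ Per f) :
    DistalSet f (forwardOrbit f x) := by
  rw [distalSet_forwardOrbit_iff_forall_iterate]
  rintro _ ⟨i, rfl⟩ p hne
  have hper : f^[i] x ∈ Per f := iterate_mem_Per hx i
  have hfin : (forwardOrbit f (f^[i] x)).Finite := finite_forwardOrbit_of_mem_Per hper
  have hclosure : closure (forwardOrbit f (f^[i] x)) = forwardOrbit f (f^[i] x) :=
    hfin.isClosed.closure_eq
  refine distalPair_apply_of_forall_mem_closure_ne (.self_iterate f p) (hf.iterate p) ?_ ?_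
  · exact hclosure.symm ▸ hfin.isCompact
  · rw [hclosure]
    exact fun z hz hpz => hne (iterate_eq_self_of_mem_forwardOrbit hper hz hpz).symm

lemma distalSet_forwardOrbit_of_disjoint_closure_Per (hf : Continuous f)
    (hK : IsCompact (closure (forwardOrbit f x)))
    (hdisj : Disjoint (closure (forwardOrbit f x)) (Per f)) :
    DistalSet f (forwardOrbit f x) := by
  rw [distalSet_forwardOrbit_iff_forall_iterate]
  intro y hy p hne
  have hp : 0 < p := Nat.pos_of_ne_zero fun hp => hne (by rw [hp, Function.iterate_zero_apply])
  have hsub : closure (forwardOrbit f y) ⊆ closure (forwardOrbit f x) :=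
    closure_mono (forwardOrbit_subset hy)
  exact distalPair_apply_of_forall_mem_closure_ne (.self_iterate f p) (hf.iterate p)
    (hK.of_isClosed_subset isClosed_closure hsub)
    fun z hz hpz => Set.disjoint_left.1 hdisj (hsub hz) ⟨p, hp, hpz⟩

lemma DistalSet.disjoint_closure_forwardOrbit_Per (h : DistalSet f (forwardOrbit f x))
    (hf : Continuous f) (hx : x ∉ Per f) : Disjoint (closure (forwardOrbit f x)) (Per f) := by
  rw [distalSet_forwardOrbit_iff_forall_iterate] at h
  refine Set.disjoint_left.2 fun y hy ⟨p, hp, hpy⟩ => ?_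
  have hpair : DistalPair f x (f^[p] x) :=
    h x (mem_forwardOrbit_self f x) p fun hpx => hx ⟨p, hp, hpx.symm⟩
  exact hpair.apply_ne_of_mem_closure (.self_iterate f p) (hf.iterate p) hy hpy

lemma distalSet_forwardOrbit_iff (hf : Continuous f)
    (hK : IsCompact (closure (forwardOrbit f x))) :
    DistalSet f (forwardOrbit f x) ↔
      x ∈ Per f ∨ Disjoint (closure (forwardOrbit f x)) (Per f) where
  mp h := or_iff_not_imp_left.2 (h.disjoint_closure_forwardOrbit_Per hf)
  mpr h := h.elim (distalSet_forwardOrbit_of_mem_Per hf)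
    (distalSet_forwardOrbit_of_disjoint_closure_Per hf hK)

end Distal

theorem orbit_distal_iff_general {X : Type*} [MetricSpace X] {f : X → X} (hf : Continuous f)
    {x : X} (hK : IsCompact (closure (Set.range fun i : ℕ => f^[i] x))) :
    DistalSet f (Set.range fun i : ℕ => f^[i] x) ↔
      ((Set.range fun i : ℕ => f^[i] x).Finite ∧ x ∈ Per f) ∨
      ((Set.range fun i : ℕ => f^[i] x).Infinite ∧ omegaLimitSet f x ∩ Per f = ∅) := by
  rw [distalSet_forwardOrbit_iff hf hK, disjoint_closure_forwardOrbit_Per_iff,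
    and_iff_right_of_imp finite_forwardOrbit_of_mem_Per]

/-- the forward orbit of `x` is a distal set for `f` iff either it is finite
and `x` is periodic, or it is infinite and `ω(x,f) ∩ Per(f) = ∅`. -/
theorem orbit_distal_iff {X : Type*} [MetricSpace X] [CompactSpace X]
    (f : X → X) (hf : Continuous f) (x : X) :
    DistalSet f (Set.range fun i : ℕ => f^[i] x) ↔
      ((Set.range fun i : ℕ => f^[i] x).Finite ∧ x ∈ Per f) ∨
      ((Set.range fun i : ℕ => f^[i] x).Infinite ∧ omegaLimitSet f x ∩ Per f = ∅) :=
  orbit_distal_iff_general hf isClosed_closure.isCompact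
end
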